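/- arXiv:2307.15352 — 2 statements merged into one kernel-verified Lean document; each statement's English description precedes it below -/
import Mathlib

section
/- Let n ≥ 1. Let a ∈ 𝒮(ℝⁿ) be real-valued and even (a(−x) = a(x) for all x) with ‖a‖_{L²(ℝⁿ)} = 1, and for ε ∈ (0,1] set a_ε(x) = ε^{−n/4} a(ε^{−1/2} x). Let σ ∈ 𝒮(ℝⁿ×ℝⁿ) vanish for x outside some compact set, and set σ_ε(x,ξ) = σ(x, εξ). Then there exists a constant C > 0 such that for all ε ∈ (0,1] and all f ∈ 𝒮(ℝⁿ): ‖Op^{KN}(σ_ε)f − Op^{Wick,a_ε}(σ_ε)f‖_{L²(ℝⁿ)} ≤ C ε ‖f‖_{L²(ℝⁿ)}. (Euclidean instance of Corollary 5.2: the semiclassical Kohn–Nirenberg and Wick quantizations differ by O(ε) in operator norm.) -/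
open MeasureTheory Complex

noncomputable section

/-- `e^{2πit}`. -/
def expi (t : ℝ) : ℂ := Complex.exp (2 * (Real.pi : ℂ) * Complex.I * (t : ℂ))

/-- Dot product on `ℝⁿ`. -/
def dotp {n : ℕ} (x y : Fin n → ℝ) : ℝ := ∑ i, x i * y i

/-- Euclidean Fourier transform `𝓕f(ξ) = ∫ f(y) e^{-2πi y·ξ} dy`. -/
def FT {n : ℕ} (f : (Fin n → ℝ) → ℂ) (ξ : Fin n → ℝ) : ℂ :=
  ∫ y, f y * expi (-(dotp y ξ))

/-- Bargmann-type transform `B_a[f](x,ξ) = ∫ f(y) a(y-x) e^{-2πi y·ξ} dy`. -/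
def Barg {n : ℕ} (a f : (Fin n → ℝ) → ℂ) (x ξ : Fin n → ℝ) : ℂ :=
  ∫ y, f y * a (y - x) * expi (-(dotp y ξ))

/-- Wick quantization with window `a`. -/
def WickOp {n : ℕ} (a : (Fin n → ℝ) → ℂ) (σ : (Fin n → ℝ) → (Fin n → ℝ) → ℂ)
    (f : (Fin n → ℝ) → ℂ) (y : Fin n → ℝ) : ℂ :=
  ∫ p : (Fin n → ℝ) × (Fin n → ℝ),
    σ p.1 p.2 * Barg a f p.1 p.2 * (starRingEnd ℂ) (a (y - p.1)) * expi (dotp y p.2)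

/-- Kohn–Nirenberg quantization. -/
def OpKN {n : ℕ} (σ : (Fin n → ℝ) → (Fin n → ℝ) → ℂ) (f : (Fin n → ℝ) → ℂ)
    (x : Fin n → ℝ) : ℂ :=
  ∫ ξ, expi (dotp x ξ) * σ x ξ * FT f ξ

/-- Partial derivative in the `i`-th coordinate direction. -/
def pd {n : ℕ} (i : Fin n) (F : (Fin n → ℝ) → ℂ) : (Fin n → ℝ) → ℂ :=
  fun x => fderiv ℝ F x (Pi.single i 1)

/-- Multi-index derivative `∂^α`. -/
def md {n : ℕ} (α : Fin n → ℕ) (F : (Fin n → ℝ) → ℂ) : (Fin n → ℝ) → ℂ :=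
  (((List.finRange n).map fun i => (pd i)^[α i]).foldr (· ∘ ·) id) F

/-- Mixed derivative `∂_x^β ∂_ξ^α σ`. -/
def mixedD {n : ℕ} (β α : Fin n → ℕ) (σ : (Fin n → ℝ) → (Fin n → ℝ) → ℂ) :
    (Fin n → ℝ) → (Fin n → ℝ) → ℂ :=
  fun x ξ => md β (fun x' => md α (fun ξ' => σ x' ξ') ξ) x

/-- The weight `1 + |ξ|²` (Euclidean norm squared). -/
def wt {n : ℕ} (ξ : Fin n → ℝ) : ℝ := 1 + ∑ i, ξ i ^ 2

/-- Length `|α|` of a multi-index, as a real number. -/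
def mOrd {n : ℕ} (α : Fin n → ℕ) : ℝ := ∑ i, (α i : ℝ)

/-- The Hörmander class `S^m_{ρ,δ}(ℝⁿ)`. -/
def SymbolClass {n : ℕ} (m ρ δ : ℝ) (σ : (Fin n → ℝ) → (Fin n → ℝ) → ℂ) : Prop :=
  (ContDiff ℝ (⊤ : ℕ∞) fun p : (Fin n → ℝ) × (Fin n → ℝ) => σ p.1 p.2) ∧
  ∀ α β : Fin n → ℕ, ∃ C > 0, ∀ x ξ,
    ‖mixedD β α σ x ξ‖ ≤ C * wt ξ ^ ((m - ρ * mOrd α + δ * mOrd β) / 2)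

/-- The seminorm `‖σ‖_{S^m_{ρ,δ},α,β}`. -/
def hSem {n : ℕ} (m ρ δ : ℝ) (α β : Fin n → ℕ)
    (σ : (Fin n → ℝ) → (Fin n → ℝ) → ℂ) : ℝ :=
  ⨆ p : (Fin n → ℝ) × (Fin n → ℝ),
    wt p.2 ^ (-(m - ρ * mOrd α + δ * mOrd β) / 2) * ‖mixedD β α σ p.1 p.2‖

/-- Squared Sobolev norm `‖f‖²_{H^s}`. -/
def sobSq {n : ℕ} (s : ℝ) (f : (Fin n → ℝ) → ℂ) : ℝ :=
  ∫ ξ, wt ξ ^ s * ‖FT f ξ‖ ^ 2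

end

/-!
With `k(x, z) = ∫ σ(x, ξ) e^{2πi z·ξ} dξ`, exchanging integrals gives
`Op^{KN}(σ_ε) f(x) = ∫ f(x - εz) k(x, z) dz`, and the Wick quantization has the same form with
`k(x, z)` replaced by `∫ k(x - sv, z) conj(a(v)) a(v - sz) dv`, where `s = √ε`. Here `k` and its
`x`-derivatives decay rapidly in `z`.

Since `‖a‖ = 1`, the difference of the two kernels is the integral against `conj(a)` of
`k' a' - k a = (k' - k) a + k (a' - a) + (k' - k) (a' - a)`, primes denoting the arguments shifted
by `O(s)`. As `a` is even, averaging over `v ↦ -v` turns the first two terms into second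
differences, which are `O(s²)`; the last one is a product of two first differences. The kernels
hence differ by `O(ε)` times an integrable function of `z`, and Cauchy–Schwarz together with the
translation invariance of the `L²` norm yields the operator bound.
-/

noncomputable section WickKN

open ComplexConjugate
open scoped SchwartzMap ENNReal

section PolyDecay

variable {V F : Type*} [NormedAddCommGroup V]

/-- The weight `(1 + ‖v‖)⁻ᴺ`, used to measure rapid decay. -/
def polyDecay (N : ℕ) (v : V) : ℝ := ((1 + ‖v‖) ^ N)⁻¹

lemma polyDecay_pos (N : ℕ) (v : V) : 0 < polyDecay N v := by
  unfold polyDecay; positivity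

lemma polyDecay_add_mul_pow (M N : ℕ) (v : V) :
    polyDecay (M + N) v * (1 + ‖v‖) ^ N = polyDecay M v := by
  unfold polyDecay
  rw [pow_add]
  field_simp

lemma polyDecay_anti_of_norm_le {W : Type*} [NormedAddCommGroup W] (N : ℕ) {v : V} {w : W}
    (h : ‖v‖ ≤ ‖w‖) : polyDecay N w ≤ polyDecay N v := by
  unfold polyDecay; gcongr

lemma integrable_polyDecay [NormedSpace ℝ V] [FiniteDimensional ℝ V] [MeasurableSpace V]
    [BorelSpace V] (μ : Measure V) [μ.IsAddHaarMeasure] {N : ℕ} (hN : Module.finrank ℝ V < N) :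
    Integrable (polyDecay N : V → ℝ) μ := by
  refine (integrable_one_add_norm (μ := μ) (r := N) (by exact_mod_cast hN)).congr
    (.of_forall fun v => ?_)
  simp only [polyDecay]
  rw [Real.rpow_neg (by positivity), Real.rpow_natCast]

lemma exists_norm_iteratedFDeriv_le_polyDecay [NormedSpace ℝ V] [NormedAddCommGroup F]
    [NormedSpace ℝ F] (T : 𝓢(V, F)) (j N : ℕ) :
    ∃ C ≥ 0, ∀ v, ‖iteratedFDeriv ℝ j T v‖ ≤ C * polyDecay N v := by
  have hbound := fun v => SchwartzMap.one_add_le_sup_seminorm_apply (𝕜 := ℝ) (m := (N, j))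
    le_rfl le_rfl T v
  refine ⟨_, (by positivity : (0 : ℝ) ≤ _).trans (hbound 0), fun v => ?_⟩
  rw [polyDecay, ← div_eq_mul_inv, le_div_iff₀ (by positivity), mul_comm]
  exact hbound v

lemma exists_norm_le_polyDecay [NormedSpace ℝ V] [NormedAddCommGroup F] [NormedSpace ℝ F]
    (T : 𝓢(V, F)) (N : ℕ) : ∃ C ≥ 0, ∀ v, ‖T v‖ ≤ C * polyDecay N v := by
  simpa only [norm_iteratedFDeriv_zero] using exists_norm_iteratedFDeriv_le_polyDecay T 0 N

end PolyDecay

section DifferenceBounds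

variable {V F : Type*} [NormedAddCommGroup V] [NormedAddCommGroup F]

/-- `f` is bounded by `c`, and its first and symmetric second differences with step `h` are
bounded by `c ‖h‖` and `c ‖h‖²`: the derivative-free form of a `C²` bound. -/
structure HasDifferenceBounds (f : V → F) (c : ℝ) : Prop where
  norm_le : ∀ x, ‖f x‖ ≤ c
  norm_sub_le : ∀ x h, ‖f (x + h) - f x‖ ≤ c * ‖h‖
  norm_symm_sub_le : ∀ x h, ‖f (x + h) - f x + (f (x - h) - f x)‖ ≤ c * ‖h‖ ^ 2

namespace HasDifferenceBounds

lemma nonneg {f : V → F} {c : ℝ} (hf : HasDifferenceBounds f c) : 0 ≤ c :=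
  (norm_nonneg _).trans (hf.norm_le 0)

lemma continuous {f : V → F} {c : ℝ} (hf : HasDifferenceBounds f c) : Continuous f := by
  refine (LipschitzWith.of_dist_le' (K := c) fun x y => ?_).continuous
  simpa only [dist_eq_norm, add_sub_cancel] using hf.norm_sub_le y (x - y)

lemma norm_sub_le_two_mul {f : V → F} {c : ℝ} (hf : HasDifferenceBounds f c) (x y : V) :
    ‖f x - f y‖ ≤ 2 * c :=
  (_root_.norm_sub_le _ _).trans (by linarith [hf.norm_le x, hf.norm_le y])

variable [NormedSpace ℝ V] [NormedSpace ℝ F]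

lemma norm_symm_sub_le_of_lipschitz_fderiv {f : V → F} {f' : V → V →L[ℝ] F} {c : ℝ} (hc : 0 ≤ c)
    (hf : ∀ x, HasFDerivAt f (f' x) x) (hlip : ∀ x y, ‖f' x - f' y‖ ≤ c * ‖x - y‖) (x h : V) :
    ‖f (x + h) - f x + (f (x - h) - f x)‖ ≤ 2 * c * ‖h‖ ^ 2 := by
  have hderiv (y : V) :
      HasFDerivAt (fun y => f (x + y) + f (x - y)) (f' (x + y) - f' (x - y)) y := by
    have hplus := (hf (x + y)).comp y ((hasFDerivAt_id y).const_add x)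
    have hminus := (hf (x - y)).comp y ((hasFDerivAt_id y).const_sub x)
    refine (hplus.add hminus).congr_fderiv ?_
    ext v
    simp [sub_eq_add_neg]
  have hbound (y : V) (hy : y ∈ Metric.closedBall 0 ‖h‖) :
      ‖f' (x + y) - f' (x - y)‖ ≤ 2 * c * ‖h‖ := by
    rw [mem_closedBall_zero_iff] at hy
    have hstep : x + y - (x - y) = (2 : ℝ) • y := by rw [two_smul]; abel
    calc ‖f' (x + y) - f' (x - y)‖ ≤ c * ‖x + y - (x - y)‖ := hlip _ _
      _ = 2 * c * ‖y‖ := by rw [hstep, norm_smul, Real.norm_two]; ring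
      _ ≤ 2 * c * ‖h‖ := by gcongr
  have hmean := (convex_closedBall (0 : V) ‖h‖).norm_image_sub_le_of_norm_hasFDerivWithin_le
    (fun y _ => (hderiv y).hasFDerivWithinAt) hbound (by simp : (0 : V) ∈ _) (by simp : h ∈ _)
  rw [add_zero, sub_zero, sub_zero] at hmean
  calc _ = ‖f (x + h) + f (x - h) - (f x + f x)‖ := by congr 1; abel
    _ ≤ _ := hmean.trans_eq (by ring)

lemma of_hasFDerivAt {f : V → F} {f' : V → V →L[ℝ] F} {f'' : V → V →L[ℝ] V →L[ℝ] F} {c : ℝ}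
    (hf : ∀ x, HasFDerivAt f (f' x) x) (hf' : ∀ x, HasFDerivAt f' (f'' x) x)
    (h₀ : ∀ x, ‖f x‖ ≤ c) (h₁ : ∀ x, ‖f' x‖ ≤ c) (h₂ : ∀ x, ‖f'' x‖ ≤ c) :
    HasDifferenceBounds f (2 * c) := by
  have hc : 0 ≤ c := (norm_nonneg _).trans (h₀ 0)
  have hc2 : c ≤ 2 * c := by linarith
  have hlip (x y : V) : ‖f' x - f' y‖ ≤ c * ‖x - y‖ :=
    convex_univ.norm_image_sub_le_of_norm_hasFDerivWithin_le
      (fun z _ => (hf' z).hasFDerivWithinAt) (fun z _ => h₂ z) trivial trivial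
  refine ⟨fun x => (h₀ x).trans hc2, fun x h => ?_,
    norm_symm_sub_le_of_lipschitz_fderiv hc hf hlip⟩
  have hmean := convex_univ.norm_image_sub_le_of_norm_hasFDerivWithin_le
    (fun z _ => (hf z).hasFDerivWithinAt) (fun z _ => h₁ z) (Set.mem_univ x)
    (Set.mem_univ (x + h))
  rw [add_sub_cancel_left] at hmean
  exact hmean.trans (by gcongr)

end HasDifferenceBounds

lemma exists_hasDifferenceBounds [NormedSpace ℝ V] [NormedSpace ℝ F] (T : 𝓢(V, F)) :
    ∃ c, HasDifferenceBounds T c := by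
  let T' := SchwartzMap.fderivCLM ℝ V F T
  let T'' := SchwartzMap.fderivCLM ℝ V (V →L[ℝ] F) T'
  obtain ⟨c₀, hc₀, h₀⟩ := exists_norm_le_polyDecay T 0
  obtain ⟨c₁, hc₁, h₁⟩ := exists_norm_le_polyDecay T' 0
  obtain ⟨c₂, hc₂, h₂⟩ := exists_norm_le_polyDecay T'' 0
  simp only [polyDecay, pow_zero, inv_one, mul_one] at h₀ h₁ h₂
  refine ⟨2 * (c₀ + c₁ + c₂), .of_hasFDerivAt (f' := T') (f'' := T'')
    (fun x => T.hasFDerivAt x) (fun x => T'.hasFDerivAt x)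
    (fun x => (h₀ x).trans ?_) (fun x => (h₁ x).trans ?_) (fun x => (h₂ x).trans ?_)⟩ <;>
  linarith

end DifferenceBounds

section WindowAverage

variable {V : Type*} [NormedAddCommGroup V]

lemma norm_le_one_add_norm_sq_mul (a : V → ℂ) (v : V) : ‖a v‖ ≤ (1 + ‖v‖) ^ 2 * ‖a v‖ :=
  le_mul_of_one_le_left (norm_nonneg _) (one_le_pow₀ (by linarith [norm_nonneg v]))

variable [MeasurableSpace V] {μ : Measure V}

lemma two_mul_norm_integral_mul_even_le [MeasurableNeg V] [μ.IsNegInvariant]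
    {g ρ : V → ℂ} {B : V → ℝ} (hρ : ∀ v, ρ (-v) = ρ v)
    (hgρ : Integrable (fun v => g v * ρ v) μ) (hB : Integrable B μ)
    (hg : ∀ v, ‖g v + g (-v)‖ * ‖ρ v‖ ≤ B v) :
    2 * ‖∫ v, g v * ρ v ∂μ‖ ≤ ∫ v, B v ∂μ := by
  have hreflect : Integrable (fun v => g (-v) * ρ v) μ := by simpa only [hρ] using hgρ.comp_neg
  have hsymm : 2 * ∫ v, g v * ρ v ∂μ = ∫ v, (g v + g (-v)) * ρ v ∂μ :=
    calc 2 * ∫ v, g v * ρ v ∂μ = (∫ v, g v * ρ v ∂μ) + ∫ v, g (-v) * ρ (-v) ∂μ := by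
          rw [integral_neg_eq_self (fun v => g v * ρ v), two_mul]
      _ = ∫ v, (g v + g (-v)) * ρ v ∂μ := by
          simp only [hρ, add_mul, integral_add hgρ hreflect]
  calc 2 * ‖∫ v, g v * ρ v ∂μ‖ = ‖∫ v, (g v + g (-v)) * ρ v ∂μ‖ := by
        rw [← hsymm, norm_mul, Complex.norm_two]
    _ ≤ ∫ v, B v ∂μ := norm_integral_le_of_norm_le hB <| .of_forall fun v =>
        (norm_mul_le _ _).trans (hg v)

variable {K a : V → ℂ} {c d : ℝ}

lemma norm_integral_sub_mul_sub_mul_conj_le [NormedSpace ℝ V] (hK : HasDifferenceBounds K c)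
    (ha : HasDifferenceBounds a d) (hmom : Integrable (fun v => (1 + ‖v‖) ^ 2 * ‖a v‖) μ)
    (s : ℝ) (x z : V) :
    ‖∫ v, (K (x - s • v) - K x) * (a (v - s • z) - a v) * conj (a v) ∂μ‖
      ≤ c * s ^ 2 * d * ‖z‖ * ∫ v, (1 + ‖v‖) ^ 2 * ‖a v‖ ∂μ := by
  rw [← integral_const_mul]
  refine norm_integral_le_of_norm_le (hmom.const_mul _) (.of_forall fun v => ?_)
  have hKfirst := hK.norm_sub_le x (-(s • v))
  have hafirst := ha.norm_sub_le v (-(s • z))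
  rw [← sub_eq_add_neg, norm_neg, norm_smul, Real.norm_eq_abs] at hKfirst hafirst
  have hc := hK.nonneg
  have hd := ha.nonneg
  calc _ ≤ c * (|s| * ‖v‖) * (d * (|s| * ‖z‖)) * ‖a v‖ := by
        rw [norm_mul, norm_mul, RCLike.norm_conj]; gcongr
    _ = c * |s| ^ 2 * d * ‖z‖ * (‖v‖ * ‖a v‖) := by ring
    _ ≤ c * s ^ 2 * d * ‖z‖ * ((1 + ‖v‖) ^ 2 * ‖a v‖) := by
        rw [sq_abs]; gcongr; nlinarith [norm_nonneg v]

variable [BorelSpace V]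

lemma integrable_mul_conj_window (ha : Continuous a)
    (hmom : Integrable (fun v => (1 + ‖v‖) ^ 2 * ‖a v‖) μ) {g : V → ℂ} {b : ℝ}
    (hg : Continuous g) (hgb : ∀ v, ‖g v‖ ≤ b) : Integrable (fun v => g v * conj (a v)) μ := by
  refine (hmom.mono' (f := fun v => conj (a v)) (by fun_prop) (.of_forall fun v => ?_)).bdd_mul
    hg.aestronglyMeasurable (.of_forall hgb)
  rw [RCLike.norm_conj]
  exact norm_le_one_add_norm_sq_mul a v

lemma norm_integral_translate_sub_mul_conj_le [μ.IsNegInvariant] (ha : HasDifferenceBounds a d)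
    (heven : ∀ v, a (-v) = a v) (hmom : Integrable (fun v => (1 + ‖v‖) ^ 2 * ‖a v‖) μ) (w : V) :
    ‖∫ v, (a (v - w) - a v) * conj (a v) ∂μ‖
      ≤ d * ‖w‖ ^ 2 * ∫ v, (1 + ‖v‖) ^ 2 * ‖a v‖ ∂μ := by
  have hac := ha.continuous
  have hint : Integrable (fun v => (a (v - w) - a v) * conj (a v)) μ :=
    integrable_mul_conj_window hac hmom (by fun_prop) (fun v => ha.norm_sub_le_two_mul (v - w) v)
  have hsymm (v : V) : ‖a (v - w) - a v + (a (-v - w) - a (-v))‖ * ‖conj (a v)‖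
      ≤ d * ‖w‖ ^ 2 * ((1 + ‖v‖) ^ 2 * ‖a v‖) := by
    rw [← neg_add', heven, heven, add_comm, RCLike.norm_conj]
    have := ha.nonneg
    gcongr
    · exact ha.norm_symm_sub_le v w
    · exact norm_le_one_add_norm_sq_mul a v
  rw [← integral_const_mul]
  exact (le_mul_of_one_le_left (norm_nonneg _) one_le_two).trans <|
    two_mul_norm_integral_mul_even_le (fun v => by rw [heven]) hint (hmom.const_mul _) hsymm

variable [NormedSpace ℝ V]

lemma norm_integral_sub_mul_mul_conj_le [μ.IsNegInvariant] (hK : HasDifferenceBounds K c)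
    (ha : HasDifferenceBounds a d) (heven : ∀ v, a (-v) = a v)
    (hmom : Integrable (fun v => (1 + ‖v‖) ^ 2 * ‖a v‖) μ) (s : ℝ) (x : V) :
    ‖∫ v, (K (x - s • v) - K x) * a v * conj (a v) ∂μ‖
      ≤ c * s ^ 2 * d * ∫ v, (1 + ‖v‖) ^ 2 * ‖a v‖ ∂μ := by
  have hKc := hK.continuous
  have hac := ha.continuous
  have hint : Integrable (fun v => (K (x - s • v) - K x) * a v * conj (a v)) μ :=
    integrable_mul_conj_window hac hmom (b := 2 * c * d) (by fun_prop) fun v => by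
      rw [norm_mul]
      gcongr
      exacts [mul_nonneg zero_le_two hK.nonneg, hK.norm_sub_le_two_mul _ _, ha.norm_le v]
  have hsymm (v : V) : ‖(K (x - s • v) - K x) * a v + (K (x - s • -v) - K x) * a (-v)‖
      * ‖conj (a v)‖ ≤ c * s ^ 2 * d * ((1 + ‖v‖) ^ 2 * ‖a v‖) := by
    have hsecond := hK.norm_symm_sub_le x (s • v)
    rw [norm_smul, mul_pow, Real.norm_eq_abs, sq_abs] at hsecond
    have hc := hK.nonneg
    have hd := ha.nonneg
    calc _ = ‖K (x + s • v) - K x + (K (x - s • v) - K x)‖ * ‖a v‖ * ‖a v‖ := by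
          rw [heven, ← add_mul, smul_neg, sub_neg_eq_add, add_comm, norm_mul, RCLike.norm_conj]
      _ ≤ c * (s ^ 2 * ‖v‖ ^ 2) * d * ‖a v‖ := by gcongr; exact ha.norm_le v
      _ = c * s ^ 2 * d * (‖v‖ ^ 2 * ‖a v‖) := by ring
      _ ≤ c * s ^ 2 * d * ((1 + ‖v‖) ^ 2 * ‖a v‖) := by gcongr; linarith
  rw [← integral_const_mul]
  exact (le_mul_of_one_le_left (norm_nonneg _) one_le_two).trans <|
    two_mul_norm_integral_mul_even_le (fun v => by rw [heven]) hint (hmom.const_mul _) hsymm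

lemma integral_window_sub_eq (hK : HasDifferenceBounds K c) (ha : HasDifferenceBounds a d)
    (hmom : Integrable (fun v => (1 + ‖v‖) ^ 2 * ‖a v‖) μ) (hmass : ∫ v, ‖a v‖ ^ 2 ∂μ = 1)
    (s : ℝ) (x w : V) :
    (∫ v, K (x - s • v) * (conj (a v) * a (v - w)) ∂μ) - K x
      = (∫ v, (K (x - s • v) - K x) * a v * conj (a v) ∂μ)
        + K x * (∫ v, (a (v - w) - a v) * conj (a v) ∂μ)
        + ∫ v, (K (x - s • v) - K x) * (a (v - w) - a v) * conj (a v) ∂μ := by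
  have hKc := hK.continuous
  have hac := ha.continuous
  have hKdiff : Continuous fun v => K (x - s • v) - K x := by fun_prop
  have hint₀ : Integrable (fun v => a v * conj (a v)) μ :=
    integrable_mul_conj_window hac hmom hac ha.norm_le
  have hint₁ : Integrable (fun v => (K (x - s • v) - K x) * a v * conj (a v)) μ := by
    simpa only [mul_assoc] using hint₀.bdd_mul hKdiff.aestronglyMeasurable
      (.of_forall fun v => hK.norm_sub_le_two_mul (x - s • v) x)
  have hint₂ : Integrable (fun v => (a (v - w) - a v) * conj (a v)) μ :=
    integrable_mul_conj_window hac hmom (by fun_prop) (fun v => ha.norm_sub_le_two_mul (v - w) v)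
  have hint₃ : Integrable (fun v => (K (x - s • v) - K x) * (a (v - w) - a v) * conj (a v)) μ := by
    simpa only [mul_assoc] using hint₂.bdd_mul hKdiff.aestronglyMeasurable
      (.of_forall fun v => hK.norm_sub_le_two_mul (x - s • v) x)
  have hunit : ∫ v, a v * conj (a v) ∂μ = 1 := by
    simp only [Complex.mul_conj', ← Complex.ofReal_pow, integral_complex_ofReal, hmass,
      Complex.ofReal_one]
  calc _ = (∫ v, (K x * (a v * conj (a v)) + (K (x - s • v) - K x) * a v * conj (a v)
          + K x * ((a (v - w) - a v) * conj (a v))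
          + (K (x - s • v) - K x) * (a (v - w) - a v) * conj (a v)) ∂μ) - K x := by
        congr 2; ext v; ring
    _ = _ := by
        rw [integral_add (by fun_prop) hint₃, integral_add (by fun_prop) (by fun_prop),
          integral_add (by fun_prop) hint₁, integral_const_mul, integral_const_mul, hunit]
        ring

lemma norm_integral_window_sub_le [μ.IsNegInvariant] (hK : HasDifferenceBounds K c)
    (ha : HasDifferenceBounds a d) (heven : ∀ v, a (-v) = a v)
    (hmom : Integrable (fun v => (1 + ‖v‖) ^ 2 * ‖a v‖) μ) (hmass : ∫ v, ‖a v‖ ^ 2 ∂μ = 1)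
    (s : ℝ) (x z : V) :
    ‖(∫ v, K (x - s • v) * (conj (a v) * a (v - s • z)) ∂μ) - K x‖
      ≤ c * s ^ 2 * (d * ∫ v, (1 + ‖v‖) ^ 2 * ‖a v‖ ∂μ) * (1 + ‖z‖) ^ 2 := by
  have hc := hK.nonneg
  have hd := ha.nonneg
  set M := ∫ v, (1 + ‖v‖) ^ 2 * ‖a v‖ ∂μ
  have : 0 ≤ M := integral_nonneg fun v => by positivity
  have htranslate : ‖K x * ∫ v, (a (v - s • z) - a v) * conj (a v) ∂μ‖
      ≤ c * (d * (s ^ 2 * ‖z‖ ^ 2) * M) := by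
    rw [← sq_abs s, ← mul_pow, ← Real.norm_eq_abs, ← norm_smul, norm_mul]
    gcongr
    exacts [hK.norm_le x, norm_integral_translate_sub_mul_conj_le ha heven hmom (s • z)]
  calc _ ≤ c * s ^ 2 * d * M + c * (d * (s ^ 2 * ‖z‖ ^ 2) * M) + c * s ^ 2 * d * ‖z‖ * M := by
        rw [integral_window_sub_eq hK ha hmom hmass]
        exact norm_add₃_le.trans (add_le_add_three
          (norm_integral_sub_mul_mul_conj_le hK ha heven hmom s x) htranslate
          (norm_integral_sub_mul_sub_mul_conj_le hK ha hmom s x z))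
    _ = c * s ^ 2 * (d * M) * (1 + ‖z‖ ^ 2 + ‖z‖) := by ring
    _ ≤ c * s ^ 2 * (d * M) * (1 + ‖z‖) ^ 2 := by gcongr; nlinarith [norm_nonneg z]

end WindowAverage

section KernelEstimate

variable {Z G : Type*} [MeasurableSpace Z] [MeasurableSpace G] {ν : Measure Z} {μ : Measure G}

lemma sq_lintegral_le_measure_univ_mul {g : Z → ℝ≥0∞} (hg : AEMeasurable g ν) :
    (∫⁻ z, g z ∂ν) ^ 2 ≤ ν Set.univ * ∫⁻ z, g z ^ 2 ∂ν := by
  have hholder := ENNReal.lintegral_mul_le_Lp_mul_Lq ν Real.HolderConjugate.two_two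
    (aemeasurable_const (b := 1)) hg
  simp only [Pi.mul_apply, one_mul, ENNReal.rpow_two, one_pow, lintegral_one] at hholder
  calc (∫⁻ z, g z ∂ν) ^ 2
      ≤ (ν Set.univ ^ (1 / 2 : ℝ) * (∫⁻ z, g z ^ 2 ∂ν) ^ (1 / 2 : ℝ)) ^ 2 := by gcongr
    _ = ν Set.univ * ∫⁻ z, g z ^ 2 ∂ν := by
      simp only [mul_pow, ← ENNReal.rpow_mul_natCast]
      norm_num

variable [AddGroup G] [MeasurableAdd G] [MeasurableSub₂ G] [SFinite ν] [SFinite μ]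
  [μ.IsAddRightInvariant] {φ : Z → G}

lemma lintegral_sq_lintegral_translate_le (hφ : Measurable φ) {g : G → ℝ≥0∞} (hg : Measurable g) :
    ∫⁻ x, (∫⁻ z, g (x - φ z) ∂ν) ^ 2 ∂μ ≤ ν Set.univ ^ 2 * ∫⁻ x, g x ^ 2 ∂μ :=
  calc ∫⁻ x, (∫⁻ z, g (x - φ z) ∂ν) ^ 2 ∂μ
      ≤ ∫⁻ x, ν Set.univ * ∫⁻ z, g (x - φ z) ^ 2 ∂ν ∂μ :=
        lintegral_mono fun x => sq_lintegral_le_measure_univ_mul (by fun_prop)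
    _ = ν Set.univ * ∫⁻ x, ∫⁻ z, g (x - φ z) ^ 2 ∂ν ∂μ :=
        lintegral_const_mul _ (Measurable.lintegral_prod_right (by fun_prop))
    _ = ν Set.univ * ∫⁻ z, ∫⁻ x, g (x - φ z) ^ 2 ∂μ ∂ν := by
        rw [lintegral_lintegral_swap (by fun_prop)]
    _ = ν Set.univ ^ 2 * ∫⁻ x, g x ^ 2 ∂μ := by
        simp only [lintegral_sub_right_eq_self (μ := μ) (fun x => g x ^ 2), lintegral_const]
        ring

variable {A : Type*} [NormedRing A] [NormedSpace ℝ A]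

lemma lintegral_sq_enorm_integral_translate_mul_le (hφ : Measurable φ) {f : G → A}
    (hf : StronglyMeasurable f) {k : G → Z → A} {w : Z → ℝ≥0∞} (hw : AEMeasurable w ν)
    (hk : ∀ x z, ‖k x z‖ₑ ≤ w z) :
    ∫⁻ x, ‖∫ z, f (x - φ z) * k x z ∂ν‖ₑ ^ 2 ∂μ ≤ (∫⁻ z, w z ∂ν) ^ 2 * ∫⁻ x, ‖f x‖ₑ ^ 2 ∂μ := by
  have hfφ (x : G) : Measurable fun z => ‖f (x - φ z)‖ₑ :=
    hf.enorm.comp (measurable_const.sub hφ)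
  have hpointwise (x : G) :
      ‖∫ z, f (x - φ z) * k x z ∂ν‖ₑ ≤ ∫⁻ z, ‖f (x - φ z)‖ₑ ∂ν.withDensity w := by
    rw [lintegral_withDensity_eq_lintegral_mul₀ hw (hfφ x).aemeasurable]
    refine (enorm_integral_le_lintegral_enorm _).trans (lintegral_mono fun z => ?_)
    rw [Pi.mul_apply, mul_comm, ← smul_eq_mul (f (x - φ z))]
    refine enorm_smul_le.trans ?_
    gcongr
    exact hk x z
  calc _ ≤ ∫⁻ x, (∫⁻ z, ‖f (x - φ z)‖ₑ ∂ν.withDensity w) ^ 2 ∂μ := by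
        gcongr with x; exact hpointwise x
    _ ≤ _ := by
        refine (lintegral_sq_lintegral_translate_le hφ hf.enorm).trans_eq ?_
        rw [withDensity_apply _ .univ, Measure.restrict_univ]

lemma sqrt_integral_sq_norm_integral_translate_mul_le (hφ : Measurable φ) {f : G → A}
    (hf : StronglyMeasurable f) (hf₂ : Integrable (fun x => ‖f x‖ ^ 2) μ) {k : G → Z → A}
    {w : Z → ℝ} (hw : Integrable w ν) (hk : ∀ x z, ‖k x z‖ ≤ w z) :
    √(∫ x, ‖∫ z, f (x - φ z) * k x z ∂ν‖ ^ 2 ∂μ) ≤ (∫ z, w z ∂ν) * √(∫ x, ‖f x‖ ^ 2 ∂μ) := by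
  have hw₀ (z : Z) : 0 ≤ w z := (norm_nonneg _).trans (hk 0 z)
  have hW : 0 ≤ ∫ z, w z ∂ν := integral_nonneg hw₀
  have hbound := lintegral_sq_enorm_integral_translate_mul_le (μ := μ) hφ hf
    hw.aemeasurable.ennreal_ofReal (fun x z => by
      rw [← ofReal_norm]; exact ENNReal.ofReal_le_ofReal (hk x z))
  simp only [← ofReal_norm, ← ENNReal.ofReal_pow (norm_nonneg _)] at hbound
  rw [← ofReal_integral_eq_lintegral_ofReal hw (.of_forall hw₀),
    ← ofReal_integral_eq_lintegral_ofReal hf₂ (.of_forall fun x => by positivity),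
    ← ENNReal.ofReal_pow hW, ← ENNReal.ofReal_mul (by positivity)] at hbound
  have hsq : ∫ x, ‖∫ z, f (x - φ z) * k x z ∂ν‖ ^ 2 ∂μ
      ≤ (∫ z, w z ∂ν) ^ 2 * ∫ x, ‖f x‖ ^ 2 ∂μ := by
    refine (Real.le_norm_self _).trans ((norm_integral_le_lintegral_norm _).trans ?_)
    simp only [norm_pow, norm_norm]
    exact ENNReal.toReal_le_of_le_ofReal
      (mul_nonneg (sq_nonneg _) (integral_nonneg fun x => by positivity)) hbound
  calc _ ≤ √((∫ z, w z ∂ν) ^ 2 * ∫ x, ‖f x‖ ^ 2 ∂μ) := Real.sqrt_le_sqrt hsq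
    _ = _ := by rw [Real.sqrt_mul (sq_nonneg _), Real.sqrt_sq hW]

end KernelEstimate

section OscillatoryIntegral

variable {n : ℕ}

lemma expi_eq_fourierChar (t : ℝ) : expi t = Real.fourierChar t := by
  rw [expi, Real.fourierChar_apply]
  push_cast
  ring_nf

lemma norm_expi (t : ℝ) : ‖expi t‖ = 1 := by
  rw [expi_eq_fourierChar, Circle.norm_coe]

lemma expi_add (s t : ℝ) : expi (s + t) = expi s * expi t := by
  rw [expi_eq_fourierChar, AddChar.map_add_eq_mul, Circle.coe_mul, expi_eq_fourierChar,
    expi_eq_fourierChar]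

@[fun_prop]
lemma continuous_expi : Continuous expi := by
  unfold expi
  fun_prop

lemma dotp_comm (x y : Fin n → ℝ) : dotp x y = dotp y x := dotProduct_comm x y

@[fun_prop]
lemma continuous_dotp {X : Type*} [TopologicalSpace X] {f g : X → Fin n → ℝ}
    (hf : Continuous f) (hg : Continuous g) : Continuous fun x => dotp (f x) (g x) := by
  unfold dotp
  fun_prop

variable {F : Type*} [NormedAddCommGroup F] [NormedSpace ℂ F]

/-- The inverse Fourier transform `z ↦ ∫ e^{2πi z·ξ} m(ξ) dξ` on `ℝⁿ`, for the dot product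
underlying `FT`. -/
def invFT (m : (Fin n → ℝ) → F) (z : Fin n → ℝ) : F := ∫ ξ, expi (dotp z ξ) • m ξ

lemma invFT_eq_fourierIntegral (m : (Fin n → ℝ) → F) (z : Fin n → ℝ) :
    invFT m z = VectorFourier.fourierIntegral Real.fourierChar volume
      (LinearMap.toContinuousBilinearMap (dotProductBilin ℝ ℝ)).toLinearMap₁₂ m (-z) := by
  simp only [invFT, VectorFourier.fourierIntegral, Circle.smul_def, expi_eq_fourierChar]
  congr! 5
  simp [dotp, dotProduct, mul_comm]

lemma exists_norm_le_one_abs_dotProduct_eq_norm (z : Fin n → ℝ) :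
    ∃ v : Fin n → ℝ, ‖v‖ ≤ 1 ∧ |v ⬝ᵥ z| = ‖z‖ := by
  cases isEmpty_or_nonempty (Fin n)
  · exact ⟨0, by simp, by simp [Subsingleton.elim z 0]⟩
  obtain ⟨i, hi⟩ := Finite.exists_max fun i => ‖z i‖
  refine ⟨Pi.single i 1, by simp [Pi.norm_single], ?_⟩
  rw [single_one_dotProduct]
  exact le_antisymm (norm_le_pi_norm z i) ((pi_norm_le_iff_of_nonneg (norm_nonneg _)).2 hi)

lemma norm_pow_mul_norm_invFT_le {m : (Fin n → ℝ) → F} {N : ℕ} (hm : ContDiff ℝ N m)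
    (hint : ∀ j ≤ N, Integrable fun ξ => ‖iteratedFDeriv ℝ j m ξ‖) (z : Fin n → ℝ) :
    ‖z‖ ^ N * ‖invFT m z‖
      ≤ 2 ^ N * ∑ j ∈ Finset.range (N + 1), ∫ ξ, ‖iteratedFDeriv ℝ j m ξ‖ := by
  let L := LinearMap.toContinuousBilinearMap (dotProductBilin ℝ ℝ : (Fin n → ℝ) →ₗ[ℝ] _)
  have hmom (k j : ℕ) (hk : k ≤ (0 : ℕ∞)) (hj : j ≤ (N : ℕ∞)) :
      Integrable fun ξ => ‖ξ‖ ^ k * ‖iteratedFDeriv ℝ j m ξ‖ := by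
    obtain rfl : k = 0 := by simpa using hk
    simpa using hint j (by exact_mod_cast hj)
  obtain ⟨v, hv, hvz⟩ := exists_norm_le_one_abs_dotProduct_eq_norm z
  have hdir := VectorFourier.pow_mul_norm_iteratedFDeriv_fourierIntegral_le
    L (μ := volume) hm hmom (k := 0) (n := N) le_rfl le_rfl v (-z)
  have hLv : |L v (-z)| = ‖z‖ := by simp [L, hvz]
  simp only [norm_iteratedFDeriv_zero, hLv, pow_zero, mul_one, zero_add, CharP.cast_eq_zero,
    mul_zero, Finset.range_one, Finset.singleton_product, Finset.sum_map,
    Function.Embedding.coeFn_mk, one_mul] at hdir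
  rw [invFT_eq_fourierIntegral]
  refine hdir.trans ?_
  gcongr
  · exact Finset.sum_nonneg fun j _ => integral_nonneg fun ξ => norm_nonneg _
  · exact mul_le_of_le_one_left (by positivity) (pow_le_one₀ (norm_nonneg v) hv)

end OscillatoryIntegral

section TwoVariables

variable {X E F : Type*} [NormedAddCommGroup X] [NormedSpace ℝ X] [NormedAddCommGroup E]
  [NormedSpace ℝ E] [NormedAddCommGroup F] [NormedSpace ℝ F]

lemma norm_iteratedFDeriv_section_le {τ : X × E → F} {j : ℕ} (hτ : ContDiff ℝ j τ) (x : X) (ξ : E) :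
    ‖iteratedFDeriv ℝ j (fun ξ => τ (x, ξ)) ξ‖ ≤ ‖iteratedFDeriv ℝ j τ (x, ξ)‖ := by
  have hsection : (fun ξ => τ (x, ξ))
      = (fun p => τ ((x, 0) + p)) ∘ ContinuousLinearMap.inr ℝ X E := by
    ext ξ; simp
  rw [hsection, ContinuousLinearMap.iteratedFDeriv_comp_right (i := j) _ (by fun_prop) ξ le_rfl,
    iteratedFDeriv_comp_add_left]
  refine (ContinuousMultilinearMap.norm_compContinuousLinearMap_le _ _).trans ?_
  have hinr := ContinuousLinearMap.norm_inr_le_one ℝ X E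
  rw [Finset.prod_const]
  simpa using mul_le_of_le_one_right (norm_nonneg (iteratedFDeriv ℝ j τ (x, ξ)))
    (pow_le_one₀ (norm_nonneg _) hinr)

lemma exists_norm_iteratedFDeriv_section_le (τ : 𝓢(X × E, F)) (j N : ℕ) :
    ∃ C ≥ 0, ∀ x ξ, ‖iteratedFDeriv ℝ j (fun ξ => τ (x, ξ)) ξ‖ ≤ C * polyDecay N ξ := by
  obtain ⟨C, hC, hbound⟩ := exists_norm_iteratedFDeriv_le_polyDecay τ j N
  refine ⟨C, hC, fun x ξ => ?_⟩
  calc _ ≤ ‖iteratedFDeriv ℝ j τ (x, ξ)‖ := norm_iteratedFDeriv_section_le (τ.smooth j) x ξ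
    _ ≤ C * polyDecay N (x, ξ) := hbound _
    _ ≤ C * polyDecay N ξ := by gcongr; exact polyDecay_anti_of_norm_le N (le_max_right _ _)

lemma exists_norm_section_le (τ : 𝓢(X × E, F)) (N : ℕ) :
    ∃ C ≥ 0, ∀ x ξ, ‖τ (x, ξ)‖ ≤ C * polyDecay N ξ := by
  simpa only [norm_iteratedFDeriv_zero] using exists_norm_iteratedFDeriv_section_le τ 0 N

/-- The derivative of a Schwartz function of two variables with respect to the first one. -/
def fderivFst (τ : 𝓢(X × E, F)) : 𝓢(X × E, X →L[ℝ] F) :=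
  SchwartzMap.postcompCLM
    ((ContinuousLinearMap.compL ℝ X (X × E) F).flip (ContinuousLinearMap.inl ℝ X E))
    (SchwartzMap.fderivCLM ℝ _ _ τ)

lemma hasFDerivAt_fderivFst (τ : 𝓢(X × E, F)) (x : X) (ξ : E) :
    HasFDerivAt (fun x => τ (x, ξ)) (fderivFst τ (x, ξ)) x :=
  (τ.hasFDerivAt (x, ξ)).comp x (hasFDerivAt_prodMk_left x ξ)

end TwoVariables

section SymbolKernel

variable {n : ℕ} {X F : Type*} [NormedAddCommGroup X] [NormedSpace ℝ X] [NormedAddCommGroup F]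
  [NormedSpace ℂ F]

/-- The convolution kernel `k(x, z) = ∫ e^{2πi z·ξ} τ(x, ξ) dξ` of the quantization of `τ`. -/
def symbolKernel (τ : 𝓢(X × (Fin n → ℝ), F)) (x : X) (z : Fin n → ℝ) : F :=
  invFT (fun ξ => τ (x, ξ)) z

lemma integrable_const_mul_polyDecay (C : ℝ) :
    Integrable fun ξ : Fin n → ℝ => C * polyDecay (n + 1) ξ :=
  (integrable_polyDecay volume (by simp)).const_mul C

lemma integrable_section (τ : 𝓢(X × (Fin n → ℝ), F)) (x : X) : Integrable fun ξ => τ (x, ξ) := by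
  obtain ⟨C, -, hC⟩ := exists_norm_section_le τ (n + 1)
  exact (integrable_const_mul_polyDecay C).mono' (by fun_prop) (.of_forall fun ξ => hC x ξ)

lemma exists_norm_pow_mul_norm_symbolKernel_le (τ : 𝓢(X × (Fin n → ℝ), F)) (N : ℕ) :
    ∃ B, ∀ x z, ‖z‖ ^ N * ‖symbolKernel τ x z‖ ≤ B := by
  choose C _ hC using fun j => exists_norm_iteratedFDeriv_section_le τ j (n + 1)
  have hsmooth (x : X) : ContDiff ℝ N fun ξ => τ (x, ξ) :=
    (τ.smooth N).comp (contDiff_prodMk_right x)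
  have hint (x : X) (j : ℕ) (hj : j ≤ N) :
      Integrable fun ξ => ‖iteratedFDeriv ℝ j (fun ξ => τ (x, ξ)) ξ‖ :=
    (integrable_const_mul_polyDecay (C j)).mono'
      ((hsmooth x).continuous_iteratedFDeriv (by exact_mod_cast hj)).norm.aestronglyMeasurable
      (.of_forall fun ξ => by simpa only [norm_norm] using hC j x ξ)
  refine ⟨2 ^ N * ∑ j ∈ Finset.range (N + 1), ∫ ξ : Fin n → ℝ, C j * polyDecay (n + 1) ξ,
    fun x z => (norm_pow_mul_norm_invFT_le (hsmooth x) (hint x) z).trans ?_⟩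
  gcongr with j hj
  · exact hint x j (by simpa [Nat.lt_succ_iff] using hj)
  · exact integrable_const_mul_polyDecay (C j)
  · exact fun ξ => hC j x ξ

lemma exists_norm_symbolKernel_le (τ : 𝓢(X × (Fin n → ℝ), F)) (N : ℕ) :
    ∃ C ≥ 0, ∀ x z, ‖symbolKernel τ x z‖ ≤ C * polyDecay N z := by
  obtain ⟨B₀, hB₀⟩ := exists_norm_pow_mul_norm_symbolKernel_le τ 0
  obtain ⟨B, hB⟩ := exists_norm_pow_mul_norm_symbolKernel_le τ N
  have hbound (x : X) (z : Fin n → ℝ) :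
      (1 + ‖z‖) ^ N * ‖symbolKernel τ x z‖ ≤ 2 ^ (N - 1) * (B₀ + B) :=
    calc _ ≤ 2 ^ (N - 1) * (1 ^ N + ‖z‖ ^ N) * ‖symbolKernel τ x z‖ := by
          gcongr; exact add_pow_le zero_le_one (norm_nonneg z) N
      _ = 2 ^ (N - 1) * (‖z‖ ^ 0 * ‖symbolKernel τ x z‖ + ‖z‖ ^ N * ‖symbolKernel τ x z‖) := by
          rw [one_pow, pow_zero]; ring
      _ ≤ _ := by gcongr; exacts [hB₀ x z, hB x z]
  refine ⟨_, (by positivity : (0 : ℝ) ≤ _).trans (hbound 0 0), fun x z => ?_⟩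
  rw [polyDecay, ← div_eq_mul_inv, le_div_iff₀ (by positivity), mul_comm]
  exact hbound x z

lemma continuous_symbolKernel (τ : 𝓢(X × (Fin n → ℝ), F)) :
    Continuous (Function.uncurry (symbolKernel τ)) := by
  obtain ⟨C, -, hC⟩ := exists_norm_section_le τ (n + 1)
  refine continuous_of_dominated (fun p => ?_) (fun p => .of_forall fun ξ => ?_)
    (integrable_const_mul_polyDecay C) (.of_forall fun ξ => ?_)
  · exact Continuous.aestronglyMeasurable (by fun_prop)
  · simpa only [norm_smul, norm_expi, one_mul] using hC p.1 ξ
  · fun_prop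

lemma hasFDerivAt_symbolKernel (τ : 𝓢(X × (Fin n → ℝ), F)) (x : X) (z : Fin n → ℝ) :
    HasFDerivAt (fun x => symbolKernel τ x z) (symbolKernel (fderivFst τ) x z) x := by
  obtain ⟨C₀, -, hC₀⟩ := exists_norm_section_le τ (n + 1)
  obtain ⟨C₁, -, hC₁⟩ := exists_norm_section_le (fderivFst τ) (n + 1)
  refine hasFDerivAt_integral_of_dominated_of_fderiv_le (𝕜 := ℝ)
    (F := fun x ξ => expi (dotp z ξ) • τ (x, ξ))
    (F' := fun x ξ => expi (dotp z ξ) • fderivFst τ (x, ξ)) (s := Set.univ) Filter.univ_mem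
    (.of_forall fun x => ?_) ?_ ?_ (.of_forall fun ξ x _ => ?_)
    (integrable_const_mul_polyDecay C₁) (.of_forall fun ξ x _ => ?_)
  · exact Continuous.aestronglyMeasurable (by fun_prop)
  · refine (integrable_const_mul_polyDecay C₀).mono' ?_ (.of_forall fun ξ => ?_)
    · exact Continuous.aestronglyMeasurable (by fun_prop)
    · simpa only [norm_smul, norm_expi, one_mul] using hC₀ x ξ
  · exact Continuous.aestronglyMeasurable (by fun_prop)
  · simpa only [norm_smul, norm_expi, one_mul] using hC₁ x ξ
  · exact (hasFDerivAt_fderivFst τ x ξ).const_smul (expi (dotp z ξ))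

lemma exists_hasDifferenceBounds_symbolKernel (τ : 𝓢(X × (Fin n → ℝ), F)) (N : ℕ) :
    ∃ C ≥ 0, ∀ z, HasDifferenceBounds (fun x => symbolKernel τ x z) (C * polyDecay N z) := by
  obtain ⟨C₀, hC₀, h₀⟩ := exists_norm_symbolKernel_le τ N
  obtain ⟨C₁, hC₁, h₁⟩ := exists_norm_symbolKernel_le (fderivFst τ) N
  obtain ⟨C₂, hC₂, h₂⟩ := exists_norm_symbolKernel_le (fderivFst (fderivFst τ)) N
  refine ⟨2 * (C₀ + C₁ + C₂), by positivity, fun z => ?_⟩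
  have hz := polyDecay_pos N z
  rw [mul_assoc]
  refine .of_hasFDerivAt (fun x => hasFDerivAt_symbolKernel τ x z)
    (fun x => hasFDerivAt_symbolKernel (fderivFst τ) x z)
    (fun x => (h₀ x z).trans ?_) (fun x => (h₁ x z).trans ?_) (fun x => (h₂ x z).trans ?_) <;>
  gcongr <;> linarith

end SymbolKernel

section Quantization

lemma pow_finrank_smul_integral_comp_smul {V F : Type*} [NormedAddCommGroup V] [NormedSpace ℝ V]
    [FiniteDimensional ℝ V] [MeasurableSpace V] [BorelSpace V] (μ : Measure V)
    [μ.IsAddHaarMeasure] [NormedAddCommGroup F] [NormedSpace ℝ F] (g : V → F) {ε : ℝ}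
    (hε : 0 < ε) : ε ^ Module.finrank ℝ V • ∫ v, g (ε • v) ∂μ = ∫ v, g v ∂μ := by
  rw [Measure.integral_comp_smul_of_nonneg μ g ε (hR := hε.le), smul_inv_smul₀ (by positivity)]

variable {n : ℕ} {ε : ℝ}

lemma expi_dotp_mul_FT (g : (Fin n → ℝ) → ℂ) (x ξ : Fin n → ℝ) (hε : 0 < ε) :
    expi (dotp x ξ) * FT g ξ = ε ^ n • invFT (fun z => g (x - ε • z)) (ε • ξ) := by
  have hphase (z : Fin n → ℝ) : dotp (ε • ξ) z = dotp x ξ + -dotp (x - ε • z) ξ := by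
    simp only [dotp, Pi.sub_apply, Pi.smul_apply, smul_eq_mul, ← Finset.sum_neg_distrib,
      ← Finset.sum_add_distrib]
    exact Finset.sum_congr rfl fun i _ => by ring
  have hscale := pow_finrank_smul_integral_comp_smul volume
    (fun u => g (x - u) * expi (-dotp (x - u) ξ)) hε
  rw [Module.finrank_fin_fun] at hscale
  rw [FT, ← integral_sub_left_eq_self _ volume x, ← hscale, mul_smul_comm,
    ← integral_const_mul, invFT]
  congr 2
  ext z
  rw [hphase, expi_add, smul_eq_mul]
  ring

lemma integral_mul_invFT {m g : (Fin n → ℝ) → ℂ} (hm : Integrable m) (hg : Integrable g) :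
    ∫ η, m η * invFT g η = ∫ z, g z * invFT m z := by
  simp only [invFT, ← integral_const_mul, smul_eq_mul]
  rw [integral_integral_swap]
  · congr with z
    congr with η
    rw [dotp_comm, mul_left_comm]
    ring
  · refine ((hm.mul_prod hg).bdd_mul (c := 1)
      (f := fun p : (Fin n → ℝ) × (Fin n → ℝ) => expi (dotp p.1 p.2))
      (Continuous.aestronglyMeasurable (by fun_prop)) (.of_forall fun p => (norm_expi _).le)).congr
      (.of_forall fun p => ?_)
    simp only [Function.uncurry, mul_left_comm]

lemma integral_expi_mul_FT_eq {m g : (Fin n → ℝ) → ℂ} (hm : Integrable m) (hg : Integrable g)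
    (hε : 0 < ε) (y : Fin n → ℝ) :
    ∫ ξ, expi (dotp y ξ) * m (ε • ξ) * FT g ξ = ∫ z, g (y - ε • z) * invFT m z := by
  have hscale := pow_finrank_smul_integral_comp_smul volume
    (fun η => m η * invFT (fun z => g (y - ε • z)) η) hε
  rw [Module.finrank_fin_fun, ← integral_smul] at hscale
  rw [← integral_mul_invFT hm ((hg.comp_sub_left y).comp_smul hε.ne'), ← hscale]
  congr 1
  ext ξ
  rw [mul_right_comm, expi_dotp_mul_FT g y ξ hε, smul_mul_assoc, mul_comm (m _)]

variable (τ : 𝓢((Fin n → ℝ) × (Fin n → ℝ), ℂ)) {b f : (Fin n → ℝ) → ℂ} {B : ℝ}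

lemma opKN_eq_integral_symbolKernel (hf : Integrable f) (hε : 0 < ε) (x : Fin n → ℝ) :
    OpKN (fun x ξ => τ (x, ε • ξ)) f x = ∫ z, f (x - ε • z) * symbolKernel τ x z :=
  integral_expi_mul_FT_eq (integrable_section τ x) hf hε x

lemma norm_barg_integrand_le (hB : ∀ u, ‖b u‖ ≤ B) (x ξ y : Fin n → ℝ) :
    ‖f y * b (y - x) * expi (-dotp y ξ)‖ ≤ ‖f y‖ * B := by
  rw [norm_mul, norm_mul, norm_expi, mul_one]
  gcongr
  exact hB _

lemma continuous_barg (hf : Integrable f) (hb : Continuous b) (hB : ∀ u, ‖b u‖ ≤ B) :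
    Continuous fun p : (Fin n → ℝ) × (Fin n → ℝ) => Barg b f p.1 p.2 := by
  refine continuous_of_dominated (fun p => ?_)
    (fun p => .of_forall fun y => norm_barg_integrand_le hB p.1 p.2 y) (hf.norm.mul_const B)
    (.of_forall fun y => by fun_prop)
  simp only [mul_assoc]
  exact hf.aestronglyMeasurable.mul (Continuous.aestronglyMeasurable (by fun_prop))

lemma norm_barg_le (hf : Integrable f) (hB : ∀ u, ‖b u‖ ≤ B) (x ξ : Fin n → ℝ) :
    ‖Barg b f x ξ‖ ≤ ∫ y, ‖f y‖ * B :=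
  norm_integral_le_of_norm_le (hf.norm.mul_const B)
    (.of_forall fun y => norm_barg_integrand_le hB x ξ y)

lemma integrable_comp_smul_snd (hε : ε ≠ 0) :
    Integrable fun p : (Fin n → ℝ) × (Fin n → ℝ) => τ (p.1, ε • p.2) := by
  let scaleSnd := (ContinuousLinearEquiv.refl ℝ (Fin n → ℝ)).prodCongr
    (ContinuousLinearEquiv.smulLeft (R₁ := ℝ) (M₁ := Fin n → ℝ) (Units.mk0 ε hε))
  have : (volume : Measure ((Fin n → ℝ) × (Fin n → ℝ))).IsAddHaarMeasure :=
    Measure.prod.instIsAddHaarMeasure _ _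
  exact (SchwartzMap.compCLMOfContinuousLinearEquiv ℝ scaleSnd τ).integrable

lemma integrable_wickOp_integrand (hf : Integrable f) (hb : Continuous b) (hB : ∀ u, ‖b u‖ ≤ B)
    (hε : ε ≠ 0) (y : Fin n → ℝ) :
    Integrable fun p : (Fin n → ℝ) × (Fin n → ℝ) =>
      τ (p.1, ε • p.2) * Barg b f p.1 p.2 * conj (b (y - p.1)) * expi (dotp y p.2) := by
  have hBarg := continuous_barg hf hb hB
  refine (((integrable_comp_smul_snd τ hε).mul_bdd hBarg.aestronglyMeasurable
    (.of_forall fun p => norm_barg_le hf hB p.1 p.2)).mul_bdd (c := B) ?_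
    (.of_forall fun p => ?_)).mul_bdd (c := 1) ?_ (.of_forall fun p => (norm_expi _).le)
  · exact Continuous.aestronglyMeasurable (by fun_prop)
  · rw [RCLike.norm_conj]; exact hB _
  · exact Continuous.aestronglyMeasurable (by fun_prop)

/-- The kernel `∫ k(y - u, z) conj(b(u)) b(u - εz) du` of the Wick quantization with window `b`:
the average over `b` of the kernel `k` of the Kohn–Nirenberg quantization. -/
def wickKernel (b : (Fin n → ℝ) → ℂ) (ε : ℝ) (y z : Fin n → ℝ) : ℂ :=
  ∫ u, symbolKernel τ (y - u) z * (conj (b u) * b (u - ε • z))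

lemma integrable_mul_symbolKernel_mul_window (hf : Integrable f) (hbi : Integrable b)
    (hb : Continuous b) (hB : ∀ u, ‖b u‖ ≤ B) (hε : ε ≠ 0) (y : Fin n → ℝ) :
    Integrable fun p : (Fin n → ℝ) × (Fin n → ℝ) =>
      f (y - ε • p.2) * (symbolKernel τ (y - p.1) p.2 * (conj (b p.1) * b (p.1 - ε • p.2))) := by
  obtain ⟨C, hC, hbound⟩ := exists_norm_symbolKernel_le τ 0
  simp only [polyDecay, pow_zero, inv_one, mul_one] at hbound
  have hkernel : Continuous fun p : (Fin n → ℝ) × (Fin n → ℝ) => symbolKernel τ (y - p.1) p.2 :=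
    (continuous_symbolKernel τ).comp
      (by fun_prop : Continuous fun p : (Fin n → ℝ) × (Fin n → ℝ) => (y - p.1, p.2))
  have hconj : Integrable fun u => conj (b u) :=
    hbi.norm.mono' (by fun_prop) (.of_forall fun u => (RCLike.norm_conj _).le)
  have hprod := hconj.mul_prod ((hf.comp_sub_left y).comp_smul hε)
  refine (hprod.mul_bdd (c := C * B)
    (g := fun p => symbolKernel τ (y - p.1) p.2 * b (p.1 - ε • p.2))
    (Continuous.aestronglyMeasurable (by fun_prop)) (.of_forall fun p => ?_)).congr
    (.of_forall fun p => by ring)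
  rw [norm_mul]
  gcongr
  exacts [hbound _ _, hB _]

lemma integrable_mul_wickKernel (hf : Integrable f) (hbi : Integrable b) (hb : Continuous b)
    (hB : ∀ u, ‖b u‖ ≤ B) (hε : ε ≠ 0) (y : Fin n → ℝ) :
    Integrable fun z => f (y - ε • z) * wickKernel τ b ε y z := by
  simpa only [integral_const_mul] using!
    (integrable_mul_symbolKernel_mul_window τ hf hbi hb hB hε y).integral_prod_right

lemma wickOp_eq_integral_wickKernel (hf : Integrable f) (hbi : Integrable b) (hb : Continuous b)
    (hB : ∀ u, ‖b u‖ ≤ B) (hε : 0 < ε) (y : Fin n → ℝ) :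
    WickOp b (fun x ξ => τ (x, ε • ξ)) f y = ∫ z, f (y - ε • z) * wickKernel τ b ε y z := by
  have hmultiplier (x : Fin n → ℝ) :
      ∫ ξ, τ (x, ε • ξ) * Barg b f x ξ * conj (b (y - x)) * expi (dotp y ξ)
        = conj (b (y - x)) * ∫ z, f (y - ε • z) * b (y - ε • z - x) * symbolKernel τ x z := by
    have hfb : Integrable fun w => f w * b (w - x) :=
      hf.mul_bdd (by fun_prop) (.of_forall fun w => hB _)
    simp only [symbolKernel]
    rw [← integral_expi_mul_FT_eq (integrable_section τ x) hfb hε y, ← integral_const_mul]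
    congr with ξ
    rw [FT, Barg]
    ring
  calc WickOp b (fun x ξ => τ (x, ε • ξ)) f y
      = ∫ x, ∫ ξ, τ (x, ε • ξ) * Barg b f x ξ * conj (b (y - x)) * expi (dotp y ξ) :=
        integral_prod _ (integrable_wickOp_integrand τ hf hb hB hε.ne' y)
    _ = ∫ u, conj (b u) * ∫ z, f (y - ε • z) * b (u - ε • z) * symbolKernel τ (y - u) z := by
        simp only [hmultiplier, sub_right_comm y]
        rw [← integral_sub_left_eq_self _ volume y]
        simp only [sub_sub_cancel]
    _ = ∫ u, ∫ z, f (y - ε • z) * (symbolKernel τ (y - u) z * (conj (b u) * b (u - ε • z))) := by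
        simp only [← integral_const_mul]
        congr with u
        congr with z
        ring
    _ = _ := by
        rw [integral_integral_swap (integrable_mul_symbolKernel_mul_window τ hf hbi hb hB hε.ne' y)]
        simp only [wickKernel, integral_const_mul]

end Quantization

section Semiclassical

variable {n : ℕ}

/-- The `L²`-normalized rescaling `a_ε(x) = ε^{-n/4} a(ε^{-1/2} x)` of a window `a`. -/
def rescaledWindow (a : (Fin n → ℝ) → ℂ) (ε : ℝ) (x : Fin n → ℝ) : ℂ :=
  ((ε ^ (-(n : ℝ) / 4) : ℝ) : ℂ) * a ((ε ^ (-(1 : ℝ) / 2) : ℝ) • x)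

lemma rescaledWindow_sqrt_smul (a : (Fin n → ℝ) → ℂ) {ε : ℝ} (hε : 0 < ε) (x : Fin n → ℝ) :
    rescaledWindow a ε (√ε • x) = ((ε ^ (-(n : ℝ) / 4) : ℝ) : ℂ) * a x := by
  rw [rescaledWindow, smul_smul, Real.sqrt_eq_rpow, ← Real.rpow_add hε]
  norm_num

lemma sqrt_pow_mul_rpow_neg_div_four_sq {ε : ℝ} (hε : 0 < ε) :
    √ε ^ n * (ε ^ (-(n : ℝ) / 4)) ^ 2 = 1 := by
  rw [Real.sqrt_eq_rpow, ← Real.rpow_mul_natCast hε.le, ← Real.rpow_mul_natCast hε.le,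
    ← Real.rpow_add hε, Nat.cast_ofNat]
  ring_nf
  exact Real.rpow_zero ε

lemma integrable_rescaledWindow {a : (Fin n → ℝ) → ℂ} (ha : Integrable a) {ε : ℝ} (hε : 0 < ε) :
    Integrable (rescaledWindow a ε) :=
  (ha.comp_smul (Real.rpow_pos_of_pos hε _).ne').const_mul _

lemma norm_rescaledWindow_le {a : (Fin n → ℝ) → ℂ} {d : ℝ} (ha : ∀ x, ‖a x‖ ≤ d) (ε : ℝ)
    (x : Fin n → ℝ) : ‖rescaledWindow a ε x‖ ≤ ‖((ε ^ (-(n : ℝ) / 4) : ℝ) : ℂ)‖ * d := by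
  rw [rescaledWindow, norm_mul]
  gcongr
  exact ha _

variable (σ : 𝓢((Fin n → ℝ) × (Fin n → ℝ), ℂ))

lemma wickKernel_rescaledWindow (a : (Fin n → ℝ) → ℂ) {ε : ℝ} (hε : 0 < ε) (y z : Fin n → ℝ) :
    wickKernel σ (rescaledWindow a ε) ε y z
      = ∫ v, symbolKernel σ (y - √ε • v) z * (conj (a v) * a (v - √ε • z)) := by
  have hscale := pow_finrank_smul_integral_comp_smul volume (fun u => symbolKernel σ (y - u) z *
    (conj (rescaledWindow a ε u) * rescaledWindow a ε (u - ε • z))) (Real.sqrt_pos.2 hε)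
  have hshift (v : Fin n → ℝ) : √ε • v - ε • z = √ε • (v - √ε • z) := by
    rw [smul_sub, smul_smul, Real.mul_self_sqrt hε.le]
  rw [wickKernel, ← hscale, Module.finrank_fin_fun, ← integral_smul]
  congr with v
  rw [hshift, rescaledWindow_sqrt_smul a hε, rescaledWindow_sqrt_smul a hε, map_mul,
    Complex.conj_ofReal, Complex.real_smul]
  have hnormalized : ((√ε ^ n : ℝ) : ℂ) * ((ε ^ (-(n : ℝ) / 4) : ℝ) : ℂ) ^ 2 = 1 :=
    mod_cast sqrt_pow_mul_rpow_neg_div_four_sq hε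
  linear_combination
    (symbolKernel σ (y - √ε • v) z * (conj (a v) * a (v - √ε • z))) * hnormalized

variable (a : 𝓢(Fin n → ℝ, ℂ))

lemma integrable_one_add_norm_sq_mul_norm : Integrable fun v => (1 + ‖v‖) ^ 2 * ‖a v‖ := by
  obtain ⟨C, -, hC⟩ := exists_norm_le_polyDecay a (n + 1 + 2)
  refine (integrable_const_mul_polyDecay C).mono' (by fun_prop) (.of_forall fun v => ?_)
  rw [norm_mul, norm_norm, Real.norm_of_nonneg (by positivity), ← polyDecay_add_mul_pow _ 2,
    ← mul_assoc, mul_comm]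
  gcongr
  exact hC v

lemma exists_norm_symbolKernel_sub_wickKernel_le (heven : ∀ x, a (-x) = a x)
    (hmass : ∫ y, ‖a y‖ ^ 2 = 1) :
    ∃ C ≥ 0, ∀ ε > 0, ∀ y z,
      ‖symbolKernel σ y z - wickKernel σ (rescaledWindow a ε) ε y z‖
        ≤ C * ε * polyDecay (n + 1) z := by
  obtain ⟨c, hc, hσ⟩ := exists_hasDifferenceBounds_symbolKernel σ (n + 1 + 2)
  obtain ⟨d, ha⟩ := exists_hasDifferenceBounds a
  have hd := ha.nonneg
  refine ⟨c * (d * ∫ v, (1 + ‖v‖) ^ 2 * ‖a v‖), by positivity, fun ε hε y z => ?_⟩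
  rw [norm_sub_rev, wickKernel_rescaledWindow σ a hε]
  calc _ ≤ c * polyDecay (n + 1 + 2) z * √ε ^ 2 * (d * ∫ v, (1 + ‖v‖) ^ 2 * ‖a v‖)
        * (1 + ‖z‖) ^ 2 := norm_integral_window_sub_le (hσ z) ha heven
          (integrable_one_add_norm_sq_mul_norm a) hmass √ε y z
    _ = _ := by rw [Real.sq_sqrt hε.le, ← polyDecay_add_mul_pow (n + 1) 2 z]; ring

lemma opKN_sub_wickOp_eq_integral {f : (Fin n → ℝ) → ℂ} (hf : Integrable f) {ε : ℝ} (hε : 0 < ε)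
    (x : Fin n → ℝ) :
    OpKN (fun x ξ => σ (x, ε • ξ)) f x - WickOp (rescaledWindow a ε) (fun x ξ => σ (x, ε • ξ)) f x
      = ∫ z, f (x - ε • z)
          * (symbolKernel σ x z - wickKernel σ (rescaledWindow a ε) ε x z) := by
  obtain ⟨d, ha⟩ := exists_hasDifferenceBounds a
  have hwindow : Continuous (rescaledWindow a ε) := by unfold rescaledWindow; fun_prop
  have hwindowInt := integrable_rescaledWindow a.integrable hε
  have hwindowBdd := norm_rescaledWindow_le ha.norm_le ε
  obtain ⟨C, -, hC⟩ := exists_norm_symbolKernel_le σ 0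
  have hkernel : Integrable fun z => f (x - ε • z) * symbolKernel σ x z :=
    ((hf.comp_sub_left x).comp_smul hε.ne').mul_bdd
      ((continuous_symbolKernel σ).comp (Continuous.prodMk_right x)).aestronglyMeasurable
      (.of_forall fun z => by simpa [polyDecay] using hC x z)
  simp only [mul_sub]
  rw [opKN_eq_integral_symbolKernel σ hf hε,
    wickOp_eq_integral_wickKernel σ hf hwindowInt hwindow hwindowBdd hε,
    integral_sub hkernel (integrable_mul_wickKernel σ hf hwindowInt hwindow hwindowBdd hε.ne' x)]

end Semiclassical

end WickKN

theorem semiclassical_wick_KN_general (n : ℕ) (a : SchwartzMap (Fin n → ℝ) ℂ)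
    (heven : ∀ x, a (-x) = a x) (ha : (∫ y, ‖a y‖ ^ 2) = 1)
    (σ : SchwartzMap ((Fin n → ℝ) × (Fin n → ℝ)) ℂ) :
    ∃ C > 0, ∀ ε : ℝ, 0 < ε → ∀ f : SchwartzMap (Fin n → ℝ) ℂ,
      √(∫ x, ‖OpKN (fun x ξ => σ (x, ε • ξ)) f x
          - WickOp (rescaledWindow a ε) (fun x ξ => σ (x, ε • ξ)) f x‖ ^ 2)
        ≤ C * ε * √(∫ x, ‖f x‖ ^ 2) := by
  obtain ⟨C, hC, hkernel⟩ := exists_norm_symbolKernel_sub_wickKernel_le σ a heven ha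
  have hweight : 0 ≤ ∫ z : Fin n → ℝ, polyDecay (n + 1) z :=
    integral_nonneg fun z => (polyDecay_pos _ z).le
  refine ⟨C * (∫ z : Fin n → ℝ, polyDecay (n + 1) z) + 1, by positivity, fun ε hε f => ?_⟩
  simp only [opKN_sub_wickOp_eq_integral σ a f.integrable hε]
  calc _ ≤ (∫ z : Fin n → ℝ, C * ε * polyDecay (n + 1) z) * √(∫ x, ‖f x‖ ^ 2) :=
        sqrt_integral_sq_norm_integral_translate_mul_le (φ := (ε • ·)) (by fun_prop)
          f.continuous.stronglyMeasurable ((f.memLp 2).integrable_norm_pow two_ne_zero)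
          (integrable_const_mul_polyDecay _) (hkernel ε hε)
    _ = C * (∫ z : Fin n → ℝ, polyDecay (n + 1) z) * ε * √(∫ x, ‖f x‖ ^ 2) := by
        rw [integral_const_mul]; ring
    _ ≤ _ := by gcongr; linarith

/-- semiclassical Kohn–Nirenberg and Wick quantizations differ by
`O(ε)` in `L²`-operator norm. -/
theorem semiclassical_wick_KN (n : ℕ) (hn : 1 ≤ n)
    (a : SchwartzMap (Fin n → ℝ) ℂ)
    (hreal : ∀ x, (a x).im = 0) (heven : ∀ x, a (-x) = a x)
    (ha : (∫ y, ‖a y‖ ^ 2) = 1)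
    (σ : SchwartzMap ((Fin n → ℝ) × (Fin n → ℝ)) ℂ)
    (K : Set (Fin n → ℝ)) (hK : IsCompact K)
    (hsupp : ∀ x ξ, x ∉ K → σ (x, ξ) = 0) :
    ∃ C > 0, ∀ ε : ℝ, 0 < ε → ε ≤ 1 → ∀ f : SchwartzMap (Fin n → ℝ) ℂ,
      Real.sqrt (∫ x, ‖OpKN (fun x ξ => σ (x, ε • ξ)) (⇑f) x
          - WickOp
              (fun x => ((ε ^ (-(n : ℝ) / 4) : ℝ) : ℂ) * a ((ε ^ (-(1 : ℝ) / 2) : ℝ) • x))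
              (fun x ξ => σ (x, ε • ξ)) (⇑f) x‖ ^ 2)
        ≤ C * ε * Real.sqrt (∫ x, ‖f x‖ ^ 2) := by
  obtain ⟨C, hC, hbound⟩ := semiclassical_wick_KN_general n a heven ha σ
  exact ⟨C, hC, fun ε hε _ => hbound ε hε⟩
end

section
/- Let n ≥ 1 and let σ ∈ 𝒮(ℝⁿ×ℝⁿ) be real-valued, vanishing for x outside some compact set, and satisfying σ(x,ξ) ≥ 0 for all (x,ξ) ∈ ℝⁿ×ℝⁿ. Then there exists a constant C > 0 such that for all ε ∈ (0,1] and all f ∈ 𝒮(ℝⁿ): Re ∫_{ℝⁿ} (∫_{ℝⁿ} e^{2πi x·ξ} σ(x, εξ) 𝓕f(ξ) dξ) · conj(f(x)) dx ≥ −C ε ∫_{ℝⁿ} |f(x)|² dx. (Theorem 1.3, semiclassical Gårding inequality, in the Euclidean case G = ℝⁿ.) -/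
open MeasureTheory Complex

/-!
Write `σ` as the Fourier integral of `S = 𝓕σ`. Then `⟨Op_ε(σ) f, f⟩ = ∫ S(p) A_f(p₁, ε p₂) dp`, with
`A_f` the ambiguity function of `f`. For fixed `x`, the function `ξ ↦ σ(x, εξ) ≥ 0` is a Fourier
multiplier, so by Plancherel its quadratic form on the wave packet `y ↦ e^{-π|x-y|²/(2ε)} f(y)` is
nonnegative. Integrating over `x` produces, up to a positive constant, the same integral
`∫ S(p) A_f(p₁, ε p₂) dp` with the additional Gaussian factor `e^{πε(i p₁·p₂ - |p₁|² - |p₂|²/4)}`,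
which is `1 + O(ε|p|²)`. Since `|A_f| ≤ ‖f‖²` and `|p|² S` is integrable, removing this factor costs
`O(ε) ‖f‖²`.
-/

open Module
open scoped SchwartzMap FourierTransform RealInnerProductSpace ComplexConjugate ComplexOrder

theorem coe_fourierChar_add (s t : ℝ) : (𝐞 (s + t) : ℂ) = 𝐞 s * 𝐞 t := by
  rw [AddChar.map_add_eq_mul, Circle.coe_mul]

theorem norm_cexp_sub_one_le {z : ℂ} (hz : z.re ≤ 0) : ‖cexp z - 1‖ ≤ ‖z‖ := by
  have mean_value := Convex.norm_image_sub_le_of_norm_hasDerivWithin_le (C := 1) (x := 0) (y := z)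
    (fun w _ => (hasDerivAt_exp w).hasDerivWithinAt)
    (fun w hw => by rw [norm_exp]; exact Real.exp_le_one_iff.2 hw)
    (convex_halfSpace_re_le 0) (by simp) hz
  simpa using mean_value

theorem hasTemperateGrowth_exp_comp {D : Type*} [NormedAddCommGroup D] [NormedSpace ℝ D] {q : D → ℝ}
    (hq : q.HasTemperateGrowth) (hq_nonpos : ∀ x, q x ≤ 0) :
    (fun x => Real.exp (q x)).HasTemperateGrowth := by
  refine Function.HasTemperateGrowth.comp' (g := Real.exp) (t := Set.Iic 0)
    (Set.range_subset_iff.2 hq_nonpos) (uniqueDiffOn_Iic 0) Real.contDiff_exp.contDiffOn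
    (fun N => ⟨0, 1, zero_le_one, fun m _ x hx => ?_⟩) hq
  rw [norm_iteratedFDerivWithin_eq_norm_iteratedDerivWithin,
    iteratedDerivWithin_eq_iteratedDeriv (uniqueDiffOn_Iic 0) Real.contDiff_exp.contDiffAt hx,
    iteratedDeriv_eq_iterate, Real.iter_deriv_exp]
  simpa using hx

variable {E : Type*} [NormedAddCommGroup E]

section GaussianWindow

/-- The Gaussian `v ↦ e^{-π|v|²/(2ε)}`, which localizes position at scale `√ε` and hence also the
rescaled frequency `ε ξ` at scale `√ε`. It is not normalized in `L²`. -/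
noncomputable def gaussianWindow (ε : ℝ) (v : E) : ℝ :=
  Real.exp (-(Real.pi / (2 * ε)) * ‖v‖ ^ 2)

theorem gaussianWindow_nonneg (ε : ℝ) (v : E) : 0 ≤ gaussianWindow ε v := Real.exp_nonneg _

theorem gaussianWindow_le_one {ε : ℝ} (hε : 0 ≤ ε) (v : E) : gaussianWindow ε v ≤ 1 := by
  rw [gaussianWindow, Real.exp_le_one_iff, neg_mul, neg_nonpos]
  positivity

@[fun_prop]
theorem continuous_gaussianWindow (ε : ℝ) : Continuous (gaussianWindow ε : E → ℝ) := by
  unfold gaussianWindow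
  fun_prop

variable [InnerProductSpace ℝ E]

theorem hasTemperateGrowth_gaussianWindow_sub {ε : ℝ} (hε : 0 ≤ ε) (x : E) :
    (fun y => gaussianWindow ε (x - y)).HasTemperateGrowth := by
  have sq_dist : (fun y => ‖x - y‖ ^ 2).HasTemperateGrowth :=
    (Function.hasTemperateGrowth_norm_sq E).comp (f := fun y => x - y) (by fun_prop)
  refine hasTemperateGrowth_exp_comp ((Function.HasTemperateGrowth.const _).mul sq_dist) fun y => ?_
  rw [neg_mul, neg_nonpos]
  positivity

theorem gaussianWindow_sub_mul_gaussianWindow_add {ε : ℝ} (hε : ε ≠ 0) (u q : E) :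
    gaussianWindow ε (u - (ε / 2) • q) * gaussianWindow ε (u + (ε / 2) • q) =
      Real.exp (-(Real.pi / ε) * ‖u‖ ^ 2) * Real.exp (-(Real.pi * ε * (‖q‖ ^ 2 / 4))) := by
  have parallelogram := parallelogram_law_with_norm ℝ u ((ε / 2) • q)
  rw [gaussianWindow, gaussianWindow, ← Real.exp_add, ← Real.exp_add, ← mul_add, add_comm (_ ^ 2),
    parallelogram, norm_smul, mul_pow, Real.norm_eq_abs, sq_abs]
  congr 1
  field_simp
  ring

/-- The wave packet of `f` at the position `x`: the product of `f` with the Gaussian window centred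
at `x`. For `ε < 0` the window grows and the definition is a junk value. -/
noncomputable def windowed (ε : ℝ) (f : 𝓢(E, ℂ)) (x : E) : 𝓢(E, ℂ) :=
  SchwartzMap.smulLeftCLM ℂ (fun y => gaussianWindow ε (x - y)) f

theorem windowed_apply {ε : ℝ} (hε : 0 ≤ ε) (f : 𝓢(E, ℂ)) (x y : E) :
    windowed ε f x y = gaussianWindow ε (x - y) * f y := by
  rw [windowed, SchwartzMap.smulLeftCLM_apply_apply (hasTemperateGrowth_gaussianWindow_sub hε x),
    real_smul]

theorem continuous_uncurry_windowed {ε : ℝ} (hε : 0 ≤ ε) (f : 𝓢(E, ℂ)) :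
    Continuous fun z : E × E => windowed ε f z.1 z.2 := by
  simp only [windowed_apply hε]
  fun_prop

theorem norm_windowed_apply_le {ε : ℝ} (hε : 0 ≤ ε) (f : 𝓢(E, ℂ)) (x y : E) :
    ‖windowed ε f x y‖ ≤ SchwartzMap.seminorm ℝ 0 0 f := by
  rw [windowed_apply hε, norm_mul, norm_real, Real.norm_of_nonneg (gaussianWindow_nonneg _ _)]
  exact (mul_le_of_le_one_left (norm_nonneg _) (gaussianWindow_le_one hε _)).trans
    (f.norm_le_seminorm ℝ y)

end GaussianWindow

variable [InnerProductSpace ℝ E]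

section WickFactor

/-- The factor `e^{πε(i p₁·p₂ - |p₁|² - |p₂|²/4)}` by which averaging over the positions of a
Gaussian window multiplies the ambiguity function at `(p₁, ε p₂)`, up to normalization. -/
noncomputable def wickFactor (ε : ℝ) (p : E × E) : ℂ :=
  cexp ((Real.pi * ε * ⟪p.1, p.2⟫ : ℝ) * I - (Real.pi * ε * (‖p.1‖ ^ 2 + ‖p.2‖ ^ 2 / 4) : ℝ))

@[fun_prop]
theorem continuous_wickFactor (ε : ℝ) : Continuous (wickFactor ε : E × E → ℂ) := by
  unfold wickFactor
  fun_prop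

theorem norm_wickFactor_le_one {ε : ℝ} (hε : 0 ≤ ε) (p : E × E) : ‖wickFactor ε p‖ ≤ 1 := by
  rw [wickFactor, norm_exp, Real.exp_le_one_iff, sub_re, re_ofReal_mul, I_re, ofReal_re, mul_zero,
    zero_sub, neg_nonpos]
  positivity

theorem norm_wickFactor_sub_one_le {ε : ℝ} (hε : 0 ≤ ε) (p : E × E) :
    ‖wickFactor ε p - 1‖ ≤ 9 / 4 * Real.pi * ε * ‖p‖ ^ 2 := by
  have re_nonpos := Real.exp_le_one_iff.1 ((norm_exp _).symm.trans_le (norm_wickFactor_le_one hε p))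
  calc ‖wickFactor ε p - 1‖
      ≤ ‖((Real.pi * ε * ⟪p.1, p.2⟫ : ℝ) * I -
          (Real.pi * ε * (‖p.1‖ ^ 2 + ‖p.2‖ ^ 2 / 4) : ℝ) : ℂ)‖ := norm_cexp_sub_one_le re_nonpos
    _ ≤ |Real.pi * ε * ⟪p.1, p.2⟫| + |Real.pi * ε * (‖p.1‖ ^ 2 + ‖p.2‖ ^ 2 / 4)| := by
        refine (norm_sub_le _ _).trans_eq ?_
        rw [norm_mul, norm_I, mul_one, norm_real, norm_real, Real.norm_eq_abs, Real.norm_eq_abs]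
    _ = Real.pi * ε * |⟪p.1, p.2⟫| + Real.pi * ε * (‖p.1‖ ^ 2 + ‖p.2‖ ^ 2 / 4) := by
        rw [abs_mul (Real.pi * ε) ⟪p.1, p.2⟫, abs_of_nonneg (by positivity : 0 ≤ Real.pi * ε),
          abs_of_nonneg (by positivity : 0 ≤ Real.pi * ε * (‖p.1‖ ^ 2 + ‖p.2‖ ^ 2 / 4))]
    _ ≤ Real.pi * ε * (‖p.1‖ * ‖p.2‖) + Real.pi * ε * (‖p.1‖ ^ 2 + ‖p.2‖ ^ 2 / 4) := by
        gcongr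
        exact abs_real_inner_le_norm _ _
    _ = Real.pi * ε * (‖p.1‖ + ‖p.2‖ / 2) ^ 2 := by ring
    _ ≤ Real.pi * ε * (‖p‖ + ‖p‖ / 2) ^ 2 := by
        gcongr
        exacts [norm_fst_le p, norm_snd_le p]
    _ = 9 / 4 * Real.pi * ε * ‖p‖ ^ 2 := by ring

end WickFactor

variable [FiniteDimensional ℝ E] [MeasurableSpace E] [BorelSpace E]

section PhaseSpaceFourier

variable {F : Type*} [NormedAddCommGroup F] [InnerProductSpace ℝ F] [FiniteDimensional ℝ F]
  [MeasurableSpace F] [BorelSpace F]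

/-- The Fourier transform of a Schwartz function on `E × F`. The product carries the sup norm and is
not an inner product space, so the transform is computed on `WithLp 2 (E × F)`. -/
noncomputable def prodFourier (σ : 𝓢(E × F, ℂ)) : 𝓢(E × F, ℂ) :=
  let e := WithLp.prodContinuousLinearEquiv 2 ℝ E F
  SchwartzMap.compCLMOfContinuousLinearEquiv ℂ e.symm
    (𝓕 (SchwartzMap.compCLMOfContinuousLinearEquiv ℂ e σ))

/-- The function on `E × F` whose Fourier transform is `S`. -/
noncomputable def fourierSymbol (S : E × F → ℂ) (z : E × F) : ℂ :=
  ∫ p, S p * 𝐞 (⟪z.1, p.1⟫ + ⟪z.2, p.2⟫)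

theorem fourierSymbol_prodFourier (σ : 𝓢(E × F, ℂ)) : fourierSymbol (prodFourier σ) = σ := by
  ext z
  let e := WithLp.prodContinuousLinearEquiv 2 ℝ E F
  let τ := SchwartzMap.compCLMOfContinuousLinearEquiv ℂ e σ
  calc fourierSymbol (prodFourier σ) z
      = ∫ p : WithLp 2 (E × F), 𝐞 ⟪p, e.symm z⟫ • 𝓕 τ p := by
        rw [fourierSymbol, ← (WithLp.volume_preserving_ofLp E F).integral_comp
          (MeasurableEquiv.toLp 2 (E × F)).symm.measurableEmbedding]
        congr with p
        rw [Circle.smul_def, smul_eq_mul, mul_comm, WithLp.prod_inner_apply, real_inner_comm _ z.1,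
          real_inner_comm _ z.2]
        rfl
    _ = 𝓕⁻ (𝓕 τ) (e.symm z) := by rw [SchwartzMap.fourierInv_coe, Real.fourierInv_eq]
    _ = σ z := by
        rw [FourierTransform.fourierInv_fourier_eq]
        exact congrArg σ (e.apply_symm_apply z)

end PhaseSpaceFourier

section Ambiguity

/-- The ambiguity function of `f`: the matrix coefficient `⟨f_p, f⟩`, where
`f_p y = e^{2πi y·p₁} f (y + p₂)` is the phase-space shift of `f` by `p`. -/
noncomputable def ambiguity (f : E → ℂ) (p : E × E) : ℂ :=
  ∫ y, 𝐞 ⟪y, p.1⟫ * (f (y + p.2) * conj (f y))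

theorem norm_ambiguity_le {f : E → ℂ} (hf : MemLp f 2) (p : E × E) :
    ‖ambiguity f p‖ ≤ ∫ y, ‖f y‖ ^ 2 := by
  have integrable_sq : Integrable fun y => ‖f y‖ ^ 2 := hf.integrable_norm_pow two_ne_zero
  have integrable_sq_shift : Integrable fun y => ‖f (y + p.2)‖ ^ 2 :=
    integrable_sq.comp_add_right p.2
  calc ‖ambiguity f p‖ ≤ ∫ y, (‖f (y + p.2)‖ ^ 2 + ‖f y‖ ^ 2) / 2 := by
        refine norm_integral_le_of_norm_le ((integrable_sq_shift.add integrable_sq).div_const 2)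
          (.of_forall fun y => ?_)
        rw [norm_mul, Circle.norm_coe, one_mul, norm_mul, RCLike.norm_conj]
        linarith [two_mul_le_add_sq ‖f (y + p.2)‖ ‖f y‖]
    _ = ∫ y, ‖f y‖ ^ 2 := by
        rw [integral_div, integral_add integrable_sq_shift integrable_sq,
          integral_add_right_eq_self fun y => ‖f y‖ ^ 2]
        ring

theorem stronglyMeasurable_ambiguity_comp {X : Type*} [TopologicalSpace X] [MeasurableSpace X]
    [OpensMeasurableSpace X] [SecondCountableTopology X] {f : X → E → ℂ} {p : X → E × E}
    (hf : Continuous ↿f) (hp : Continuous p) :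
    StronglyMeasurable fun x => ambiguity (f x) (p x) := by
  refine StronglyMeasurable.integral_prod_right (f := fun x y => (𝐞 ⟪y, (p x).1⟫ : ℂ) *
    (f x (y + (p x).2) * conj (f x y))) (Continuous.stronglyMeasurable ?_)
  have continuous_shift : Continuous fun z : X × E => f z.1 (z.2 + (p z.1).2) :=
    hf.comp (f := fun z : X × E => (z.1, z.2 + (p z.1).2)) (by fun_prop)
  have continuous_self : Continuous fun z : X × E => f z.1 z.2 := hf
  exact Continuous.mul (by fun_prop) (continuous_shift.mul (continuous_conj.comp continuous_self))

theorem integrable_mul_ambiguity {S : E × E → ℂ} (hS : Integrable S) (ε : ℝ) (f : 𝓢(E, ℂ)) :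
    Integrable fun p => S p * ambiguity f (p.1, ε • p.2) := by
  have measurable_ambiguity : StronglyMeasurable fun p : E × E => ambiguity f (p.1, ε • p.2) :=
    stronglyMeasurable_ambiguity_comp (f := fun _ : E × E => ⇑f)
      (f.continuous.comp continuous_snd) (by fun_prop)
  exact hS.mul_bdd (c := ∫ y, ‖f y‖ ^ 2) measurable_ambiguity.aestronglyMeasurable
    (.of_forall fun p => norm_ambiguity_le (f.memLp 2) _)

end Ambiguity

section SemiclassicalOp

/-- The semiclassical Kohn–Nirenberg quantization `Op_ε(σ)`. -/
noncomputable def semiclassicalOp (ε : ℝ) (σ : E × E → ℂ) (f : E → ℂ) (x : E) : ℂ :=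
  ∫ ξ, 𝐞 ⟪x, ξ⟫ * σ (x, ε • ξ) * 𝓕 f ξ

theorem apply_eq_integral_fourier (f : 𝓢(E, ℂ)) (x : E) : f x = ∫ ξ, 𝐞 ⟪x, ξ⟫ * 𝓕 f ξ := by
  calc f x = 𝓕⁻ (𝓕 f) x := by rw [FourierTransform.fourierInv_fourier_eq]
    _ = ∫ ξ, 𝐞 ⟪ξ, x⟫ • 𝓕 f ξ := by rw [SchwartzMap.fourierInv_coe, Real.fourierInv_eq]
    _ = ∫ ξ, 𝐞 ⟪x, ξ⟫ * 𝓕 f ξ := by simp only [Circle.smul_def, smul_eq_mul, real_inner_comm]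

theorem semiclassicalOp_fourierSymbol {S : E × E → ℂ} (hS : Integrable S) (ε : ℝ) (f : 𝓢(E, ℂ))
    (x : E) :
    semiclassicalOp ε (fourierSymbol S) f x =
      ∫ p, S p * (𝐞 ⟪x, p.1⟫ * f (x + ε • p.2)) := by
  have integrable_prod : Integrable
      (fun z : E × (E × E) => (𝐞 (⟪x + ε • z.2.2, z.1⟫ + ⟪x, z.2.1⟫) : ℂ) * (𝓕 f z.1 * S z.2))
      (volume.prod volume) :=
    ((𝓕 f).integrable.mul_prod hS).bdd_mul (c := 1)
      (Continuous.aestronglyMeasurable (by fun_prop)) (.of_forall fun z => (Circle.norm_coe _).le)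
  calc semiclassicalOp ε (fourierSymbol S) f x
      = ∫ ξ, ∫ p : E × E, (𝐞 (⟪x + ε • p.2, ξ⟫ + ⟪x, p.1⟫) : ℂ) * (𝓕 f ξ * S p) := by
        refine integral_congr_ae (.of_forall fun ξ => ?_)
        simp only [fourierSymbol, ← integral_const_mul, ← integral_mul_const,
          SchwartzMap.fourier_coe]
        refine integral_congr_ae (.of_forall fun p => ?_)
        simp only [inner_add_left, inner_smul_left, coe_fourierChar_add, conj_trivial,
          real_inner_comm ξ p.2]
        ring
    _ = ∫ p : E × E, ∫ ξ, (𝐞 (⟪x + ε • p.2, ξ⟫ + ⟪x, p.1⟫) : ℂ) * (𝓕 f ξ * S p) :=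
        integral_integral_swap integrable_prod
    _ = ∫ p, S p * (𝐞 ⟪x, p.1⟫ * f (x + ε • p.2)) := by
        refine integral_congr_ae (.of_forall fun p => ?_)
        simp only [apply_eq_integral_fourier f, ← integral_const_mul]
        refine integral_congr_ae (.of_forall fun ξ => ?_)
        simp only [coe_fourierChar_add]
        ring

theorem integral_semiclassicalOp_mul_conj {S : E × E → ℂ} (hS : Integrable S) (ε : ℝ)
    (f : 𝓢(E, ℂ)) :
    ∫ x, semiclassicalOp ε (fourierSymbol S) f x * conj (f x) =
      ∫ p, S p * ambiguity f (p.1, ε • p.2) := by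
  have integrable_prod : Integrable
      (fun z : E × (E × E) => (𝐞 ⟪z.1, z.2.1⟫ * f (z.1 + ε • z.2.2)) * (conj (f z.1) * S z.2))
      (volume.prod volume) := by
    refine ((conjCLE.integrable_comp_iff.2 f.integrable).mul_prod hS).bdd_mul
      (c := SchwartzMap.seminorm ℝ 0 0 f) (Continuous.aestronglyMeasurable (by fun_prop))
      (.of_forall fun z => ?_)
    rw [norm_mul, Circle.norm_coe, one_mul]
    exact f.norm_le_seminorm ℝ _
  calc ∫ x, semiclassicalOp ε (fourierSymbol S) f x * conj (f x)
      = ∫ x, ∫ p : E × E, (𝐞 ⟪x, p.1⟫ * f (x + ε • p.2)) * (conj (f x) * S p) := by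
        refine integral_congr_ae (.of_forall fun x => ?_)
        simp only [semiclassicalOp_fourierSymbol hS, ← integral_mul_const]
        refine integral_congr_ae (.of_forall fun p => ?_)
        ring
    _ = ∫ p : E × E, ∫ x, (𝐞 ⟪x, p.1⟫ * f (x + ε • p.2)) * (conj (f x) * S p) :=
        integral_integral_swap integrable_prod
    _ = ∫ p, S p * ambiguity f (p.1, ε • p.2) := by
        refine integral_congr_ae (.of_forall fun p => ?_)
        simp only [ambiguity, ← integral_const_mul]
        refine integral_congr_ae (.of_forall fun x => ?_)
        ring

end SemiclassicalOp

section FixedPosition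

theorem fourier_compSubConstCLM (g : 𝓢(E, ℂ)) (a ξ : E) :
    𝓕 (g.compSubConstCLM ℂ a) ξ = 𝐞 ⟪-a, ξ⟫ * 𝓕 g ξ := by
  rw [SchwartzMap.fourier_coe, SchwartzMap.fourier_coe, show g.compSubConstCLM ℂ a = g ∘ (· + -a)
    from funext fun v => congrArg g (sub_eq_add_neg v a)]
  exact congrFun (VectorFourier.fourierIntegral_comp_add_right 𝐞 volume (innerₗ E) g (-a)) ξ

theorem ambiguity_zero_left (g : 𝓢(E, ℂ)) (q : E) :
    ambiguity g (0, q) = ∫ ξ, (𝐞 ⟪q, ξ⟫ : ℂ) * (‖𝓕 g ξ‖ ^ 2 : ℝ) := by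
  calc ambiguity g (0, q)
      = ∫ y, inner ℂ (g y) (g.compSubConstCLM ℂ (-q) y) := by simp [ambiguity, RCLike.inner_apply]
    _ = ∫ ξ, inner ℂ (𝓕 g ξ) (𝓕 (g.compSubConstCLM ℂ (-q)) ξ) :=
        (SchwartzMap.integral_inner_fourier_fourier g _).symm
    _ = ∫ ξ, (𝐞 ⟪q, ξ⟫ : ℂ) * (‖𝓕 g ξ‖ ^ 2 : ℝ) := by
        congr with ξ
        rw [fourier_compSubConstCLM, RCLike.inner_apply, mul_assoc, Complex.mul_conj', neg_neg,
          ofReal_pow]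

theorem integral_mul_ambiguity_zero_left {S : E × E → ℂ} (hS : Integrable S) (ε : ℝ)
    (g : 𝓢(E, ℂ)) (x : E) :
    ∫ p, S p * (𝐞 ⟪x, p.1⟫ * ambiguity g (0, ε • p.2)) =
      ∫ ξ, fourierSymbol S (x, ε • ξ) * (‖𝓕 g ξ‖ ^ 2 : ℝ) := by
  have integrable_sq : Integrable fun ξ => ((‖𝓕 g ξ‖ ^ 2 : ℝ) : ℂ) :=
    (((𝓕 g).memLp 2).integrable_norm_pow two_ne_zero).ofReal
  have integrable_prod : Integrable
      (fun z : (E × E) × E => (𝐞 (⟪x, z.1.1⟫ + ⟪ε • z.2, z.1.2⟫) : ℂ) *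
        (S z.1 * (‖𝓕 g z.2‖ ^ 2 : ℝ))) (volume.prod volume) :=
    (hS.mul_prod integrable_sq).bdd_mul (c := 1)
      (Continuous.aestronglyMeasurable (by fun_prop)) (.of_forall fun z => (Circle.norm_coe _).le)
  calc ∫ p, S p * (𝐞 ⟪x, p.1⟫ * ambiguity g (0, ε • p.2))
      = ∫ p : E × E, ∫ ξ, (𝐞 (⟪x, p.1⟫ + ⟪ε • ξ, p.2⟫) : ℂ) * (S p * (‖𝓕 g ξ‖ ^ 2 : ℝ)) := by
        refine integral_congr_ae (.of_forall fun p => ?_)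
        simp only [ambiguity_zero_left, ← integral_const_mul]
        refine integral_congr_ae (.of_forall fun ξ => ?_)
        simp only [inner_smul_left, coe_fourierChar_add, real_inner_comm ξ p.2]
        ring
    _ = ∫ ξ, ∫ p : E × E, (𝐞 (⟪x, p.1⟫ + ⟪ε • ξ, p.2⟫) : ℂ) * (S p * (‖𝓕 g ξ‖ ^ 2 : ℝ)) :=
        integral_integral_swap integrable_prod
    _ = ∫ ξ, fourierSymbol S (x, ε • ξ) * (‖𝓕 g ξ‖ ^ 2 : ℝ) := by
        refine integral_congr_ae (.of_forall fun ξ => ?_)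
        simp only [fourierSymbol, ← integral_mul_const]
        refine integral_congr_ae (.of_forall fun p => ?_)
        ring

theorem integral_mul_ambiguity_zero_left_nonneg {S : E × E → ℂ} (hS : Integrable S)
    (hpos : 0 ≤ fourierSymbol S) (ε : ℝ) (g : 𝓢(E, ℂ)) (x : E) :
    0 ≤ ∫ p, S p * (𝐞 ⟪x, p.1⟫ * ambiguity g (0, ε • p.2)) := by
  rw [integral_mul_ambiguity_zero_left hS]
  exact integral_nonneg fun ξ => mul_nonneg (hpos _) (by positivity)

end FixedPosition

section GaussianFourier

theorem integrable_gaussianWindow {ε : ℝ} (hε : 0 < ε) :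
    Integrable (gaussianWindow ε : E → ℝ) := by
  have re_pos : 0 < ((Real.pi / (2 * ε) : ℝ) : ℂ).re := by
    rw [ofReal_re]
    positivity
  have integrable_ofReal : Integrable fun v : E => ((gaussianWindow ε v : ℝ) : ℂ) := by
    simpa [gaussianWindow] using
      GaussianFourier.integrable_cexp_neg_mul_sq_norm_add (V := E) re_pos 0 0
  exact integrable_ofReal.re

theorem integral_fourierChar_mul_gaussian {ε : ℝ} (hε : 0 < ε) (η : E) :
    ∫ u, (𝐞 ⟪u, η⟫ : ℂ) * (Real.exp (-(Real.pi / ε) * ‖u‖ ^ 2) : ℝ) =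
      (ε ^ (finrank ℝ E / 2 : ℝ) : ℝ) * (Real.exp (-(Real.pi * ε * ‖η‖ ^ 2)) : ℝ) := by
  have re_pos : 0 < ((Real.pi / ε : ℝ) : ℂ).re := by
    rw [ofReal_re]
    positivity
  have hε' : (ε : ℂ) ≠ 0 := by exact_mod_cast hε.ne'
  have hπ : (Real.pi : ℂ) ≠ 0 := by exact_mod_cast Real.pi_ne_zero
  calc ∫ u, (𝐞 ⟪u, η⟫ : ℂ) * (Real.exp (-(Real.pi / ε) * ‖u‖ ^ 2) : ℝ)
      = 𝓕⁻ (fun u : E => cexp (-(Real.pi / ε : ℝ) * ‖u‖ ^ 2)) η := by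
        simp [Real.fourierInv_eq, Circle.smul_def]
    _ = (Real.pi / (Real.pi / ε : ℝ)) ^ (finrank ℝ E / 2 : ℂ) *
          cexp (-Real.pi ^ 2 * ‖-η‖ ^ 2 / (Real.pi / ε : ℝ)) := by
        rw [Real.fourierInv_eq_fourier_neg, fourier_gaussian_innerProductSpace re_pos]
    _ = _ := by
        rw [ofReal_cpow hε.le, ofReal_exp, norm_neg]
        push_cast
        congr 2 <;> field_simp

theorem integral_fourierChar_mul_gaussianWindow_mul_gaussianWindow {ε : ℝ} (hε : 0 < ε)
    (p : E × E) (y : E) :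
    ∫ x, (𝐞 ⟪x, p.1⟫ : ℂ) *
        (gaussianWindow ε (x - (y + ε • p.2)) * gaussianWindow ε (x - y) : ℝ) =
      (ε ^ (finrank ℝ E / 2 : ℝ) : ℝ) * (wickFactor ε p * 𝐞 ⟪y, p.1⟫) := by
  let midpoint : E := y + (ε / 2) • p.2
  have recenter (u : E) :
      (𝐞 ⟪u + midpoint, p.1⟫ : ℂ) * (gaussianWindow ε (u + midpoint - (y + ε • p.2)) *
        gaussianWindow ε (u + midpoint - y) : ℝ) =
      (𝐞 ⟪midpoint, p.1⟫ * (Real.exp (-(Real.pi * ε * (‖p.2‖ ^ 2 / 4))) : ℝ)) *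
        (𝐞 ⟪u, p.1⟫ * (Real.exp (-(Real.pi / ε) * ‖u‖ ^ 2) : ℝ)) := by
    have left : u + midpoint - (y + ε • p.2) = u - (ε / 2) • p.2 := by module
    have right : u + midpoint - y = u + (ε / 2) • p.2 := by module
    rw [left, right, gaussianWindow_sub_mul_gaussianWindow_add hε.ne', inner_add_left,
      coe_fourierChar_add, ofReal_mul]
    ring
  rw [← integral_add_right_eq_self _ midpoint]
  simp only [recenter]
  rw [integral_const_mul, integral_fourierChar_mul_gaussian hε, mul_left_comm]
  congr 1
  rw [wickFactor, inner_add_left, coe_fourierChar_add, inner_smul_left,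
    real_inner_comm p.1 p.2, Real.fourierChar_apply, Real.fourierChar_apply, ofReal_exp, ofReal_exp]
  simp only [← Complex.exp_add, conj_trivial]
  congr 1
  push_cast
  ring

end GaussianFourier

section Wick

theorem integrable_uncurry_windowed {ε : ℝ} (hε : 0 < ε) (f : 𝓢(E, ℂ)) :
    Integrable (fun z : E × E => windowed ε f z.1 z.2) (volume.prod volume) := by
  simp only [windowed_apply hε.le, mul_comm _ (f _)]
  exact f.integrable.convolution_integrand (ContinuousLinearMap.mul ℝ ℂ)
    (integrable_gaussianWindow hε).ofReal

theorem integrable_integral_norm_windowed_sq {ε : ℝ} (hε : 0 < ε) (f : 𝓢(E, ℂ)) :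
    Integrable fun x => ∫ y, ‖windowed ε f x y‖ ^ 2 := by
  have integrable_sq : Integrable (fun z : E × E => ‖windowed ε f z.1 z.2‖ ^ 2)
      (volume.prod volume) := by
    simp only [sq]
    exact (integrable_uncurry_windowed hε f).norm.bdd_mul (c := SchwartzMap.seminorm ℝ 0 0 f)
      (continuous_uncurry_windowed hε.le f).norm.aestronglyMeasurable
      (.of_forall fun z => (norm_norm _).trans_le (norm_windowed_apply_le hε.le f _ _))
  exact integrable_sq.integral_prod_left

theorem integral_fourierChar_mul_ambiguity_windowed {ε : ℝ} (hε : 0 < ε) (f : 𝓢(E, ℂ))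
    (p : E × E) :
    ∫ x, 𝐞 ⟪x, p.1⟫ * ambiguity (windowed ε f x) (0, ε • p.2) =
      (ε ^ (finrank ℝ E / 2 : ℝ) : ℝ) * (wickFactor ε p * ambiguity f (p.1, ε • p.2)) := by
  have integrable_prod : Integrable
      (fun z : E × E => (𝐞 ⟪z.1, p.1⟫ * windowed ε f z.1 (z.2 + ε • p.2)) *
        conj (windowed ε f z.1 z.2)) (volume.prod volume) := by
    refine (conjCLE.integrable_comp_iff.2 (integrable_uncurry_windowed hε f)).bdd_mul
      (c := SchwartzMap.seminorm ℝ 0 0 f) (Continuous.aestronglyMeasurable ?_)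
      (.of_forall fun z => ?_)
    · exact Continuous.mul (by fun_prop) ((continuous_uncurry_windowed hε.le f).comp
        (f := fun z : E × E => (z.1, z.2 + ε • p.2)) (by fun_prop))
    · rw [norm_mul, Circle.norm_coe, one_mul]
      exact norm_windowed_apply_le hε.le f _ _
  calc ∫ x, 𝐞 ⟪x, p.1⟫ * ambiguity (windowed ε f x) (0, ε • p.2)
      = ∫ x, ∫ y, (𝐞 ⟪x, p.1⟫ * windowed ε f x (y + ε • p.2)) * conj (windowed ε f x y) := by
        simp only [ambiguity, inner_zero_right, AddChar.map_zero_eq_one, Circle.coe_one, one_mul,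
          ← integral_const_mul, mul_assoc]
    _ = ∫ y, ∫ x, (𝐞 ⟪x, p.1⟫ * windowed ε f x (y + ε • p.2)) * conj (windowed ε f x y) :=
        integral_integral_swap integrable_prod
    _ = ∫ y, (∫ x, (𝐞 ⟪x, p.1⟫ : ℂ) *
          (gaussianWindow ε (x - (y + ε • p.2)) * gaussianWindow ε (x - y) : ℝ)) *
            (f (y + ε • p.2) * conj (f y)) := by
        simp only [windowed_apply hε.le, map_mul, conj_ofReal, ofReal_mul, ← integral_mul_const]
        congr with y
        congr with x
        ring
    _ = (ε ^ (finrank ℝ E / 2 : ℝ) : ℝ) * (wickFactor ε p * ambiguity f (p.1, ε • p.2)) := by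
        simp only [integral_fourierChar_mul_gaussianWindow_mul_gaussianWindow hε, ambiguity,
          ← integral_const_mul, mul_assoc]

theorem integrable_mul_ambiguity_windowed {S : E × E → ℂ} (hS : Integrable S) {ε : ℝ} (hε : 0 < ε)
    (f : 𝓢(E, ℂ)) :
    Integrable (fun z : E × (E × E) =>
      S z.2 * (𝐞 ⟪z.1, z.2.1⟫ * ambiguity (windowed ε f z.1) (0, ε • z.2.2)))
      (volume.prod volume) := by
  have measurable_ambiguity : StronglyMeasurable fun z : E × (E × E) =>
      ambiguity (windowed ε f z.1) (0, ε • z.2.2) :=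
    stronglyMeasurable_ambiguity_comp (f := fun z : E × (E × E) => windowed ε f z.1)
      ((continuous_uncurry_windowed hε.le f).comp
        (f := fun w : (E × (E × E)) × E => (w.1.1, w.2)) (by fun_prop)) (by fun_prop)
  have measurable_char : StronglyMeasurable fun z : E × (E × E) => (𝐞 ⟪z.1, z.2.1⟫ : ℂ) :=
    Continuous.stronglyMeasurable (by fun_prop)
  refine ((integrable_integral_norm_windowed_sq hε f).mul_prod hS.norm).mono'
    (hS.aestronglyMeasurable.comp_snd.mul
      (measurable_char.mul measurable_ambiguity).aestronglyMeasurable) (.of_forall fun z => ?_)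
  rw [norm_mul, norm_mul, Circle.norm_coe, one_mul, mul_comm]
  gcongr
  exact norm_ambiguity_le ((windowed ε f z.1).memLp 2) _

theorem integral_mul_wickFactor_mul_ambiguity_nonneg {S : E × E → ℂ} (hS : Integrable S)
    (hpos : 0 ≤ fourierSymbol S) {ε : ℝ} (hε : 0 < ε) (f : 𝓢(E, ℂ)) :
    0 ≤ ∫ p, S p * (wickFactor ε p * ambiguity f (p.1, ε • p.2)) := by
  have scaled_nonneg : 0 ≤ ((ε ^ (finrank ℝ E / 2 : ℝ) : ℝ) : ℂ) *
      ∫ p, S p * (wickFactor ε p * ambiguity f (p.1, ε • p.2)) := by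
    calc (0 : ℂ)
        ≤ ∫ x, ∫ p : E × E,
            S p * (𝐞 ⟪x, p.1⟫ * ambiguity (windowed ε f x) (0, ε • p.2)) :=
          integral_nonneg fun x =>
            integral_mul_ambiguity_zero_left_nonneg hS hpos ε (windowed ε f x) x
      _ = ∫ p : E × E, ∫ x,
            S p * (𝐞 ⟪x, p.1⟫ * ambiguity (windowed ε f x) (0, ε • p.2)) :=
          integral_integral_swap (integrable_mul_ambiguity_windowed hS hε f)
      _ = _ := by
          simp only [integral_const_mul, integral_fourierChar_mul_ambiguity_windowed hε]
          rw [← integral_const_mul]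
          congr with p
          ring
  exact le_of_mul_le_mul_left (by rwa [mul_zero]) (by positivity)

end Wick

section Garding

theorem garding_of_fourierSymbol_nonneg {S : E × E → ℂ} (hS : Integrable S)
    (hS_sq : Integrable fun p => ‖p‖ ^ 2 * ‖S p‖) (hpos : 0 ≤ fourierSymbol S) {ε : ℝ}
    (hε : 0 < ε) (f : 𝓢(E, ℂ)) :
    -(9 / 4 * Real.pi * ∫ p, ‖p‖ ^ 2 * ‖S p‖) * ε * ∫ x, ‖f x‖ ^ 2 ≤
      (∫ x, semiclassicalOp ε (fourierSymbol S) f x * conj (f x)).re := by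
  have integrable_amb := integrable_mul_ambiguity hS ε f
  have integrable_wick :
      Integrable fun p => S p * (wickFactor ε p * ambiguity f (p.1, ε • p.2)) := by
    simp only [mul_left_comm (S _)]
    exact integrable_amb.bdd_mul (c := 1) (continuous_wickFactor ε).aestronglyMeasurable
      (.of_forall (norm_wickFactor_le_one hε.le))
  have error_le : ‖∫ p, (S p * (wickFactor ε p * ambiguity f (p.1, ε • p.2)) -
      S p * ambiguity f (p.1, ε • p.2))‖ ≤
      9 / 4 * Real.pi * ε * (∫ x, ‖f x‖ ^ 2) * ∫ p, ‖p‖ ^ 2 * ‖S p‖ := by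
    rw [← integral_const_mul]
    refine norm_integral_le_of_norm_le (hS_sq.const_mul _) (.of_forall fun p => ?_)
    calc ‖S p * (wickFactor ε p * ambiguity f (p.1, ε • p.2)) - S p * ambiguity f (p.1, ε • p.2)‖
        = ‖S p‖ * (‖wickFactor ε p - 1‖ * ‖ambiguity f (p.1, ε • p.2)‖) := by
          rw [← norm_mul, ← norm_mul, sub_one_mul, mul_sub]
      _ ≤ ‖S p‖ * (9 / 4 * Real.pi * ε * ‖p‖ ^ 2 * ∫ x, ‖f x‖ ^ 2) := by
          gcongr
          · exact norm_wickFactor_sub_one_le hε.le p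
          · exact norm_ambiguity_le (f.memLp 2) _
      _ = _ := by ring
  have wick_nonneg : 0 ≤ (∫ p, S p * (wickFactor ε p * ambiguity f (p.1, ε • p.2))).re :=
    (nonneg_iff.1 (integral_mul_wickFactor_mul_ambiguity_nonneg hS hpos hε f)).1
  have re_error_le := (re_le_norm _).trans error_le
  rw [integral_sub integrable_wick integrable_amb, sub_re] at re_error_le
  rw [integral_semiclassicalOp_mul_conj hS]
  linarith

theorem semiclassical_garding_general (σ : 𝓢(E × E, ℝ)) (hpos : ∀ z, 0 ≤ σ z) :
    ∃ C > 0, ∀ ε > 0, ∀ f : 𝓢(E, ℂ),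
      -C * ε * ∫ x, ‖f x‖ ^ 2 ≤
        (∫ x, semiclassicalOp ε (fun z => (σ z : ℂ)) f x * conj (f x)).re := by
  have : (volume : Measure (E × E)).IsAddHaarMeasure :=
    Measure.prod.instIsAddHaarMeasure volume volume
  let S := prodFourier (SchwartzMap.postcompCLM (𝕜 := ℝ) ofRealCLM σ)
  have symbol_eq : fourierSymbol S = fun z => (σ z : ℂ) := fourierSymbol_prodFourier _
  have symbol_nonneg : 0 ≤ fourierSymbol S := by
    rw [symbol_eq]
    exact fun z => zero_le_real.2 (hpos z)
  let M := 9 / 4 * Real.pi * ∫ p, ‖p‖ ^ 2 * ‖S p‖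
  refine ⟨M + 1, by positivity, fun ε hε f => ?_⟩
  calc -(M + 1) * ε * ∫ x, ‖f x‖ ^ 2 ≤ -M * ε * ∫ x, ‖f x‖ ^ 2 := by
        gcongr
        linarith
    _ ≤ _ := by
        rw [← symbol_eq]
        exact garding_of_fourierSymbol_nonneg S.integrable (S.integrable_pow_mul volume 2)
          symbol_nonneg hε f

end Garding

section Coordinates

variable {n : ℕ}

/-- The Schwartz function on Euclidean space with the same values as the Schwartz function `f` on
`Fin n → ℝ`, whose norm is the sup norm. -/
noncomputable def euclideanSchwartz (f : 𝓢(Fin n → ℝ, ℂ)) : 𝓢(EuclideanSpace ℝ (Fin n), ℂ) :=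
  SchwartzMap.compCLMOfContinuousLinearEquiv ℝ (PiLp.continuousLinearEquiv 2 ℝ fun _ => ℝ) f

/-- The symbol on Euclidean space with the same values as the symbol `σ` on `Fin n → ℝ`. -/
noncomputable def euclideanSymbol (σ : 𝓢((Fin n → ℝ) × (Fin n → ℝ), ℝ)) :
    𝓢(EuclideanSpace ℝ (Fin n) × EuclideanSpace ℝ (Fin n), ℝ) :=
  let e := PiLp.continuousLinearEquiv 2 ℝ fun _ : Fin n => ℝ
  SchwartzMap.compCLMOfContinuousLinearEquiv ℝ (e.prodCongr e) σ

theorem euclideanSchwartz_apply (f : 𝓢(Fin n → ℝ, ℂ)) (x : EuclideanSpace ℝ (Fin n)) :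
    euclideanSchwartz f x = f x.ofLp := rfl

theorem integral_euclideanSpace {F : Type*} [NormedAddCommGroup F] [NormedSpace ℝ F]
    (g : (Fin n → ℝ) → F) :
    ∫ x : EuclideanSpace ℝ (Fin n), g x.ofLp = ∫ x, g x :=
  (PiLp.volume_preserving_ofLp _).integral_comp
    (MeasurableEquiv.toLp 2 _).symm.measurableEmbedding g

theorem fourierChar_inner (x ξ : EuclideanSpace ℝ (Fin n)) :
    (𝐞 ⟪x, ξ⟫ : ℂ) = expi (dotp x.ofLp ξ.ofLp) := by
  simp only [Real.fourierChar_apply, expi, dotp, PiLp.inner_apply, RCLike.inner_apply,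
    conj_trivial, mul_comm (ξ _)]
  push_cast
  ring_nf

theorem fourier_euclideanSchwartz (f : 𝓢(Fin n → ℝ, ℂ)) (ξ : EuclideanSpace ℝ (Fin n)) :
    𝓕 (euclideanSchwartz f : EuclideanSpace ℝ (Fin n) → ℂ) ξ = FT f ξ.ofLp := by
  rw [Real.fourier_eq, FT, ← integral_euclideanSpace]
  congr with y
  rw [Circle.smul_def, smul_eq_mul, ← inner_neg_right, fourierChar_inner, mul_comm,
    euclideanSchwartz_apply]
  simp [dotp]

theorem semiclassicalOp_euclideanSymbol (σ : 𝓢((Fin n → ℝ) × (Fin n → ℝ), ℝ)) (ε : ℝ)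
    (f : 𝓢(Fin n → ℝ, ℂ)) (x : EuclideanSpace ℝ (Fin n)) :
    semiclassicalOp ε (fun z => (euclideanSymbol σ z : ℂ)) (euclideanSchwartz f) x =
      ∫ ξ, expi (dotp x.ofLp ξ) * (σ (x.ofLp, ε • ξ) : ℝ) * FT f ξ := by
  rw [semiclassicalOp, ← integral_euclideanSpace]
  congr with ξ
  rw [fourierChar_inner, fourier_euclideanSchwartz]
  rfl

end Coordinates

/-- semiclassical Gårding inequality on `ℝⁿ`. -/
theorem semiclassical_garding (n : ℕ) (hn : 1 ≤ n)
    (σ : SchwartzMap ((Fin n → ℝ) × (Fin n → ℝ)) ℝ)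
    (K : Set (Fin n → ℝ)) (hK : IsCompact K)
    (hsupp : ∀ x ξ, x ∉ K → σ (x, ξ) = 0)
    (hpos : ∀ x ξ, 0 ≤ σ (x, ξ)) :
    ∃ C > 0, ∀ ε : ℝ, 0 < ε → ε ≤ 1 → ∀ f : SchwartzMap (Fin n → ℝ) ℂ,
      -C * ε * (∫ x, ‖f x‖ ^ 2)
        ≤ (∫ x, (∫ ξ, expi (dotp x ξ) * ((σ (x, ε • ξ) : ℝ) : ℂ) * FT (⇑f) ξ)
            * (starRingEnd ℂ) (f x)).re := by
  obtain ⟨C, C_pos, garding⟩ := semiclassical_garding_general (euclideanSymbol σ)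
    fun z => hpos z.1.ofLp z.2.ofLp
  refine ⟨C, C_pos, fun ε hε _ f => ?_⟩
  simpa only [semiclassicalOp_euclideanSymbol, euclideanSchwartz_apply,
    ← integral_euclideanSpace] using garding ε hε (euclideanSchwartz f)
end
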